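/- arXiv:2507.14300 — 2 statements merged into one kernel-verified Lean document; each statement's English description precedes it below -/
import Mathlib

section
/- Fix integers W ≥ 1 and M ≥ 1, positive reals k₁, …, k_M, and δ > 0. Let Φ : ℝ × ℝ^{WM} → (W×W real symmetric matrices) satisfy: for all t and v, Φ(t,v) − μ·I_W is positive definite, where μ = δ if M = 1 and μ = (δk₁ + k₂)/k₁² if M ≥ 2; and if M ≥ 2 assume additionally that the matrix Q̄ = Σ̄ + Σ̄ᵀ is positive definite, where Σ̄ is the M×M matrix with entries Σ̄_{ij} = c_{M−1} if i = 1, Σ̄_{ij} = c_{M−i} − c_{M−i+1} if 2 ≤ i ≤ j < M, Σ̄_{ij} = −c_{M−j} if i = j+1, Σ̄_{MM} = δ, Σ̄_{ij} = 0 if i > j+1, with c_l = k_{l+1}/k_l. Let Ξ(t,v) be the (WM)×(WM) block matrix whose first block-column is (−k₁Φ(t,v), …, −k_MΦ(t,v))ᵀ, with I_W in block position (m, m+1) for m = 1, …, M−1, and zeros elsewhere, and let B ⊗ u denote the vector in ℝ^{WM} whose last W-block equals u and all other blocks are zero. Then there exist constants c > 0, λ > 0, and ρ > 0 such that for every bounded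 piecewise-continuous input u : ℝ → ℝ^W and every differentiable ξ : ℝ → ℝ^{WM} with ξ′(t) = Ξ(t, ξ(t))·ξ(t) + B ⊗ u(t) for all t ≥ t₀, it holds for all t ≥ t₀ that ‖ξ(t)‖ ≤ c·‖ξ(t₀)‖·exp(−λ(t − t₀)) + ρ·sup_{t₀ ≤ s ≤ t} ‖u(s)‖. -/
/-!
Write `M = n + 1`. In the coordinates `X_p = ξ_{M-p} / k_{M-p}`, `0 ≤ p ≤ n`, and with the ratios
`D_i = k_{M-i+1} / k_{M-i}`, `D_0 = 0`, each component of the system has the Lur'e form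
`X_p' = D_p X_{p-1} - w` (plus `u / k_M` when `p = 0`), where the feedback `w = Φ ξ_1` satisfies the
sector condition `⟨X_n, w⟩ ≥ (D_n + δ') |X_n|²` for some `δ' > 0`. The feedback cancels in the
differences `S X = (X_p - X_{p+1})_p`, whose derivative is a linear map `T X` (up to the input), so
for `V = ⟨S X, H S X⟩ + X_n²` with `H` symmetric one has, without input,
`V' / 2 ≤ -((D_n + δ') X_n² - D_n X_{n-1} X_n - ⟨S X, H T X⟩)`. It remains to find `H ≻ 0` making the
bracket positive definite; then `V` is a Lyapunov function, Young's inequality absorbs the input,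
and the comparison principle gives the estimate (`lure_iss`).

The matrix `H` comes from a Kalman–Yakubovich–Popov lemma (`kyp`): such an `H` exists as soon as
the real part of the form `q(X) = (D_n + δ') |X_n|² - D_n X_{n-1} X̄_n` is positive at every nonzero
complex `X` with `S X = 0` or `T X = iω S X`. The proof separates two convex sets of matrices by
Hahn–Banach, and decomposes the dual matrix along a basis of such `X` (`exists_pencil_basis`).

On the curve `T X = iω S X` the entries of `X` are given by the recursion `B_0 = B_1 = 1`,
`B_{j+2} = 1 - e_j B_j` with `e_j = D_j D_{j+1} / ω²` (`freq_solution`), and positivity of `q` becomes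
`D_n B_n < (D_n + δ') (D_n² B_n² / ω² + B_{n+1}²)` (`freq_ineq`). This follows from `D_{i+2} ≥ 9/4 D_i`,
i.e. `e_{j+1} ≥ 9/4 e_j`, and from `D_n² < 4 (D_n - D_{n-1}) δ'`. Both are read off from `Q̄ ≻ 0` by
evaluating its form at suitable vectors (`FormPos.growth_two`, `minor_of_posDef`). Finally, `H ≻ 0` is
checked on eigenvectors, again by means of `Q̄ ≻ 0` (`exists_lyapunov`).
-/

open Matrix

/-- The Euclidean norm of a real vector. -/
noncomputable def euclNorm {ι : Type*} [Fintype ι] (v : ι → ℝ) : ℝ :=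
  Real.sqrt (∑ i, v i ^ 2)

/-! ### Numerical inequalities for the recursion `B_{j+2} = 1 - e_j B_j` -/

/-- The roots of `x (1 - 16/81 x) = 1` are about `1.37` and `3.69`, so `x` lies below the smaller one. -/
lemma num_root {x : ℝ} (h : x * (1 - 16 / 81 * x) ≤ 1) (hx : x < 2.7) : x ≤ 1.375 := by
  by_contra h'; push Not at h'; nlinarith

/-- Combined, the hypotheses read `2.617 E (1 - 4/9 E) ≤ 1`, which keeps `E` off the interval between
the two roots. Here and below `E`, `b`, `m` stand for `e_{j+3}`, `B_{j+4}`, `B_{j+5}` in `seq_core`. -/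
lemma num_gap {E b : ℝ} (h1 : 2.617 * E * b ≤ 1) (h2 : 1 - 4 / 9 * E ≤ b) (hE : 0 < E) :
    E ≤ 0.52 ∨ 1.73 ≤ E := by
  by_contra h
  push Not at h
  have := mul_le_mul_of_nonneg_left h2 hE.le
  nlinarith [mul_pos (sub_pos.2 h.1) (sub_pos.2 h.2)]

lemma num_small {E b m : ℝ} (hE : 0 < E) (hE1 : E ≤ 0.52) (hm1 : 1 - E ≤ m) (hb : 0 ≤ b) (hb1 : b ≤ 1)
    (hm : m ^ 2 ≤ 0.8 * b * (1 - 2.617 * E * b)) (mE : m ^ 2 * E ≤ 0.0765) : False := by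
  have hm2 : (1 - E) ^ 2 ≤ m ^ 2 := by nlinarith
  by_cases hE2 : E ≤ 0.1
  · nlinarith [mul_nonneg hE.le (mul_nonneg hb hb)]
  · push Not at hE2
    have h1 := mul_le_mul_of_nonneg_right hm2 hE.le
    have h2 := mul_nonneg (sub_nonneg.2 hE2.le) (sub_nonneg.2 hE1)
    have h3 : (1 - E) ^ 2 * E ≤ 0.0765 := h1.trans mE
    nlinarith [mul_nonneg h2 hE.le]

lemma num_mid {E m : ℝ} (hE1 : 2 < E) (hE2 : E < 3.2) (hm1 : m ≤ 1 - E + 16 / 81 * E ^ 2)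
     (mE : m ^ 2 * E ≤ 0.0765) : False := by
  by_cases h : E ≤ 2.44
  · have h1 : m ≤ -0.205 := by nlinarith
    have h2 : 0.042 ≤ m ^ 2 := by nlinarith
    nlinarith
  · push Not at h
    have h1 : m ≤ -0.1772 := by nlinarith
    have h2 : 0.03139 ≤ m ^ 2 := by nlinarith
    nlinarith

lemma num_two {E b m : ℝ} (hE1 : 1.73 ≤ E) (hE2 : E ≤ 2) (hm1 : m ≤ 1 - E + 16 / 81 * E ^ 2)
    (hb : 1 - 4 / 9 * E ≤ b)
    (hm : m ^ 2 ≤ 0.8 * b * (1 - 2.617 * E * b)) : False := by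
  obtain ⟨t, rfl⟩ : ∃ t, E = 2 - t := ⟨2 - E, by ring⟩
  obtain ⟨d, rfl⟩ : ∃ d, b = 1 - 4 / 9 * (2 - t) + d := ⟨b - (1 - 4 / 9 * (2 - t)), by ring⟩
  have ht : 0 ≤ t := by linarith
  have ht2 : t ≤ 0.27 := by linarith
  have hd : 0 ≤ d := by linarith
  have h1 : m ≤ - (0.2095 - 0.264 * t) := by nlinarith [mul_nonneg ht (sub_nonneg.2 ht2)]
  have h2 : (0.2095 - 0.264 * t) ^ 2 ≤ m ^ 2 := by nlinarith
  have h3 : 0.8 * (1 - 4 / 9 * (2 - t) + d) * (1 - 2.617 * (2 - t) * (1 - 4 / 9 * (2 - t) + d))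
     ≤ 0.8 * (1 - 4 / 9 * (2 - t)) * (1 - 2.617 * (2 - t) * (1 - 4 / 9 * (2 - t))) := by
    have h4 : 1 ≤ 2.617 * (2 - t) * (2 * (1 - 4 / 9 * (2 - t))) := by nlinarith
    have h5 : 0 ≤ 2.617 * (2 - t) * d := by nlinarith
    nlinarith [mul_nonneg hd h5, mul_le_mul_of_nonneg_left h4 hd]
  have h6 := h2.trans (hm.trans h3)
  nlinarith [mul_nonneg ht (sub_nonneg.2 ht2), mul_nonneg ht (mul_nonneg ht (sub_nonneg.2 ht2))]

lemma num_large {E m c F : ℝ} (hE : 3.2 ≤ E) (mE : m ^ 2 * E ≤ 0.0765) (hm : m = 1 - E * c)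
    (hF : 9 / 4 * (1 - c) ≤ F) : 1.435 ≤ F := by
  have hm2 : -0.155 ≤ m := by
    by_contra h; push Not at h
    have : 0.024 ≤ m ^ 2 := by nlinarith
    nlinarith
  have hc : c ≤ 0.362 := by
    by_contra h; push Not at h; nlinarith
  linarith

lemma seq_mono {e : ℕ → ℝ} (h0 : ∀ j, 0 ≤ e j) (hg : ∀ j, 9 / 4 * e j ≤ e (j + 1)) : Monotone e :=
  monotone_nat_of_le_succ fun j => by linarith [h0 j, hg j]

/-- The solution of the recursion stays in `[0, 1]` as long as the coefficients are at most one. -/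
lemma seq_unit {e B : ℕ → ℝ} (h0 : ∀ j, 0 ≤ e j) (hg : ∀ j, 9 / 4 * e j ≤ e (j + 1))
    (hB0 : B 0 = 1) (hB1 : B 1 = 1) (hB : ∀ j, B (j + 2) = 1 - e j * B j)
    {k : ℕ} (hk : e k ≤ 1) (i : ℕ) (hi : i ≤ k + 2) : 0 ≤ B i ∧ B i ≤ 1 := by
  induction i using Nat.twoStepInduction with
  | zero => simp [hB0]
  | one => simp [hB1]
  | more j ih _ =>
    obtain ⟨h1, h2⟩ := ih (by omega)
    have h3 : e j ≤ 1 := (seq_mono h0 hg (by omega : j ≤ k)).trans hk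
    have h4 := h0 j
    rw [hB]
    constructor <;> nlinarith

/-- Descent for large coefficients: if `e_k ≥ 2.6` while `B_k`, `B_{k+1}` are positive with
`e_k B_k ≤ 1` and `e_{k+1} B_{k+1} ≤ 2`, then either the same holds at `k - 2`, or `e_{k-2} < 2.6`, in
which case `e_{k-2} B_{k-2}` is too small for `B_k = 1 - e_{k-2} B_{k-2}` to be compatible with
`e_k B_k ≤ 1`. Since `e_j = 0` for `j ≤ 5`, the descent cannot go on. -/
lemma seq_T {e B : ℕ → ℝ} (h0 : ∀ j, 0 ≤ e j) (hg : ∀ j, 9 / 4 * e j ≤ e (j + 1))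
    (hz : ∀ j ≤ 5, e j = 0)
    (hB0 : B 0 = 1) (hB1 : B 1 = 1) (hB : ∀ j, B (j + 2) = 1 - e j * B j)
    (k : ℕ) (hk : 2.6 ≤ e k) (h1 : 0 < B k) (h2 : e k * B k ≤ 1) (h3 : 0 < B (k + 1))
    (h4 : e (k + 1) * B (k + 1) ≤ 2) : False := by
  induction k using Nat.strong_induction_on with
  | _ k ih =>
  by_cases h6 : k ≤ 5
  · rw [hz k h6] at hk; norm_num at hk
  obtain ⟨j, rfl⟩ : ∃ j, k = j + 4 := ⟨k - 4, by omega⟩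
  have e0 := hg j
  have e1 := hg (j + 1)
  have e2 := hg (j + 2)
  have e3 := hg (j + 3)
  have e4 := hg (j + 4)
  have p0 := h0 j
  have p1 := h0 (j + 1)
  have p2 := h0 (j + 2)
  have p3 := h0 (j + 3)
  have b4 : B (j + 4) = 1 - e (j + 2) * B (j + 2) := hB _
  have b5 : B (j + 4 + 1) = 1 - e (j + 3) * B (j + 3) := hB (j + 3)
  have q4 : B (j + 4) < 1 / 2 := by nlinarith
  have q5 : B (j + 4 + 1) < 1 / 2 := by nlinarith
  have r2 : 0 < B (j + 2) := by
    by_contra h; nlinarith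
  have r3 : 0 < B (j + 3) := by
    by_contra h; nlinarith
  by_cases hf : 2.6 ≤ e (j + 2)
  · exact ih (j + 2) (by omega) hf r2 (by linarith) r3 (by simpa using by linarith)
  push Not at hf
  have hu := seq_unit h0 hg hB0 hB1 hB (k := j) (by linarith)
  obtain ⟨u0, u0'⟩ := hu j (by omega)
  obtain ⟨u1, u1'⟩ := hu (j + 1) (by omega)
  obtain ⟨u2, u2'⟩ := hu (j + 2) (by omega)
  have b2 : B (j + 2) = 1 - e j * B j := hB _
  have b3 : B (j + 3) = 1 - e (j + 1) * B (j + 1) := hB _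
  have l2 : 1 - 16 / 81 * e (j + 2) ≤ B (j + 2) := by nlinarith
  have l3 : 1 - e (j + 1) ≤ B (j + 3) := by nlinarith
  have f1 : e (j + 2) ≤ 1.375 := by
    refine num_root ?_ (by linarith)
    have := mul_le_mul_of_nonneg_left l2 p2
    linarith
  have g1 : e (j + 1) ≤ 0.612 := by linarith
  have h5 := mul_le_mul_of_nonneg_left l3 p3
  have g2 : e (j + 3) ≤ 2.6 := by nlinarith only [h5, g1, p3, b5, h3]
  have g3 : e (j + 3) ≤ 1.375 := by
    refine num_root ?_ (by linarith)
    have : 1 - 16 / 81 * e (j + 3) ≤ 1 - e (j + 1) := by linarith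
    have := mul_le_mul_of_nonneg_left this p3
    linarith
  have f2 : e (j + 2) ≤ 0.612 := by linarith
  have h7 : e (j + 2) * B (j + 2) ≤ 0.612 := by nlinarith only [f2, u2', u2, p2]
  nlinarith only [h7, b4, h2, hk]

/-- The bound on `B_{j+5}²` forces `2.617 e_{j+3} B_{j+4} ≤ 1` and `B_{j+5}² e_{j+3} ≤ 0.0765`. If
`e_{j+2} ≥ 2.6` this starts the descent of `seq_T`; otherwise all earlier terms are controlled by
`seq_unit`, and the value of `e_{j+3}` is excluded range by range. -/
lemma seq_core {e B : ℕ → ℝ} (h0 : ∀ j, 0 ≤ e j) (hg : ∀ j, 9 / 4 * e j ≤ e (j + 1))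
    (hz : ∀ j ≤ 5, e j = 0)
    (hB0 : B 0 = 1) (hB1 : B 1 = 1) (hB : ∀ j, B (j + 2) = 1 - e j * B j)
    (j : ℕ) (hE : 0 < e (j + 3)) (hb : 0 ≤ B (j + 4))
    (hm : B (j + 5) ^ 2 ≤ 0.8 * B (j + 4) * (1 - 2.617 * e (j + 3) * B (j + 4))) : False := by
  have e0 := hg j
  have e1 := hg (j + 1)
  have e2 := hg (j + 2)
  have p0 := h0 j
  have p1 := h0 (j + 1)
  have p2 := h0 (j + 2)
  have b2 : B (j + 2) = 1 - e j * B j := hB _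
  have b3 : B (j + 3) = 1 - e (j + 1) * B (j + 1) := hB _
  have b4 : B (j + 4) = 1 - e (j + 2) * B (j + 2) := hB _
  have b5 : B (j + 5) = 1 - e (j + 3) * B (j + 3) := hB _
  have Eb : 2.617 * e (j + 3) * B (j + 4) ≤ 1 := by
    by_contra h
    push Not at h
    rcases hb.eq_or_lt with h' | h'
    · rw [← h'] at h; norm_num at h
    · nlinarith [sq_nonneg (B (j + 5))]
  have mE : B (j + 5) ^ 2 * e (j + 3) ≤ 0.0765 := by
    have := mul_le_mul_of_nonneg_right hm hE.le
    nlinarith [sq_nonneg (2.617 * e (j + 3) * B (j + 4) - 1 / 2)]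
  by_cases hF : 2.6 ≤ e (j + 2)
  · have hm1 : B (j + 5) ^ 2 < 1 / 4 := by nlinarith
    have hm2 : B (j + 5) < 1 / 2 := by nlinarith
    have hm3 : -1 / 2 < B (j + 5) := by nlinarith
    have hb1 : B (j + 4) < 1 / 2 := by nlinarith
    refine seq_T h0 hg hz hB0 hB1 hB (j + 2) hF ?_ (by linarith) ?_ ?_
    · by_contra h; nlinarith
    · by_contra h; change ¬ 0 < B (j + 3) at h; nlinarith
    · change e (j + 3) * B (j + 3) ≤ 2; linarith
  push Not at hF
  have hu := seq_unit h0 hg hB0 hB1 hB (k := j) (by linarith)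
  obtain ⟨u0, u0'⟩ := hu j (by omega)
  obtain ⟨u1, u1'⟩ := hu (j + 1) (by omega)
  obtain ⟨u2, u2'⟩ := hu (j + 2) (by omega)
  have l2 : 1 - 16 / 81 * e (j + 2) ≤ B (j + 2) := by nlinarith
  have l3 : 1 - e (j + 1) ≤ B (j + 3) := by nlinarith
  have l3' : B (j + 3) ≤ 1 := by nlinarith
  have l4 : 1 - e (j + 2) ≤ B (j + 4) := by nlinarith
  have l4' : 1 - 4 / 9 * e (j + 3) ≤ B (j + 4) := by linarith
  have b4' : B (j + 4) ≤ 1 := by nlinarith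
  have hEs : e (j + 3) ≤ 0.52 ∨ 1.73 ≤ e (j + 3) := by
    exact num_gap Eb l4' hE
  rcases hEs with hE1 | hE1
  · exact num_small hE hE1 (by nlinarith only [b5, l3', hE]) hb b4' hm mE
  · have hm1 : B (j + 5) ≤ 1 - e (j + 3) + 16 / 81 * e (j + 3) ^ 2 := by
      have h1 : 1 - 16 / 81 * e (j + 3) ≤ B (j + 3) := by linarith
      have := mul_le_mul_of_nonneg_left h1 hE.le
      linarith
    by_cases hE3 : 3.2 ≤ e (j + 3)
    · have h1 := num_large hE3 mE b5 (by linarith : _ ≤ e (j + 2))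
      have h2 := num_root (x := e (j + 2)) (by
        have := mul_le_mul_of_nonneg_left l2 p2
        linarith) (by linarith)
      linarith
    · push Not at hE3
      by_cases hE4 : e (j + 3) ≤ 2
      · exact num_two hE1 hE4 hm1 l4' hm
      · push Not at hE4
        exact num_mid hE4 hE3 hm1 mE

/-! ### The frequency inequality -/

/-- Reduction of the negated frequency inequality to a two-constant form. The hypothesis on `δ` gives
`D + δ ≥ 5/4 D`, whence the factor `0.8`, and `D + δ ≥ 2.617 d`, the minimum of `D + D² / (4 (D - d))`
over `D > d` being `(3 + √5)/2 · d`. -/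
lemma ineq_reduce {D d δ w b m : ℝ} (hd : 0 < d) (hdD : d < D) (hδ : D ^ 2 < 4 * (D - d) * δ)
    (hw : 0 < w) (h : (D + δ) * (D ^ 2 * w * b ^ 2 + m ^ 2) ≤ D * b) :
    0 ≤ b ∧ m ^ 2 ≤ 0.8 * b * (1 - 2.617 * (d * D * w) * b) := by
  have hD : 0 < D := hd.trans hdD
  have hδ0 : 0 < δ := by
    by_contra h'; push Not at h'; nlinarith [sq_nonneg D]
  have hDM : 5 / 4 * D ≤ D + δ := by
    by_contra h'; push Not at h'; nlinarith
  have hDM2 : 2.617 * d ≤ D + δ := by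
    by_contra h'; push Not at h'
    have := mul_lt_mul_of_pos_left h' (sub_pos.2 hdD)
    nlinarith [sq_nonneg (D - 1.4468 * d), mul_pos hd hd]
  have hb : 0 ≤ b := by
    have : 0 ≤ (D + δ) * (D ^ 2 * w * b ^ 2 + m ^ 2) := by positivity
    by_contra h'; push Not at h'; nlinarith
  refine ⟨hb, ?_⟩
  have h1 : (D + δ) * m ^ 2 ≤ D * (b * (1 - D * (D + δ) * w * b)) := by linarith
  have h2 : 0 ≤ b * (1 - D * (D + δ) * w * b) := by
    have : 0 ≤ (D + δ) * m ^ 2 := by positivity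
    by_contra h'; push Not at h'; nlinarith
  have h3 : m ^ 2 ≤ 0.8 * (b * (1 - D * (D + δ) * w * b)) := by
    by_contra h'; push Not at h'
    have h4 := mul_lt_mul_of_pos_left h' hD
    nlinarith [sq_nonneg m]
  have h5 : b * (1 - D * (D + δ) * w * b) ≤ b * (1 - 2.617 * (d * D * w) * b) := by
    apply mul_le_mul_of_nonneg_left _ hb
    have : 2.617 * d * (D * w * b) ≤ (D + δ) * (D * w * b) :=
      mul_le_mul_of_nonneg_right hDM2 (by positivity)
    linarith
  linarith

/-- The solution of `B₀ = B₁ = 1`, `B_{j+2} = 1 - e_j B_j`. -/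
def recSeq (e : ℕ → ℝ) : ℕ → ℝ
  | 0 => 1
  | 1 => 1
  | j + 2 => 1 - e j * recSeq e j

/-- The frequency inequality, with `w = ω⁻²`. -/
lemma freq_ineq (n : ℕ) (hn : 1 ≤ n) (D : ℕ → ℝ) (hD0 : D 0 = 0)
    (hDpos : ∀ i, 1 ≤ i → i ≤ n → 0 < D i)
    (hDg : ∀ i, i + 2 ≤ n → 9 / 4 * D i ≤ D (i + 2)) (δ : ℝ) (hδ : 0 < δ)
    (hn2 : 2 ≤ n → D (n - 1) < D n ∧ D n ^ 2 < 4 * (D n - D (n - 1)) * δ)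
    (w : ℝ) (hw : 0 < w) :
    let B := recSeq fun j => D j * D (j + 1) * w
    D n * B n < (D n + δ) * (D n ^ 2 * w * B n ^ 2 + B (n + 1) ^ 2) := by
  intro B
  have hBdef : B = recSeq fun j => D j * D (j + 1) * w := rfl
  rcases hn.eq_or_lt with rfl | hn'
  · have h1 : B 1 = 1 := rfl
    have h2 : B 2 = 1 := by simp [hBdef, recSeq, hD0]
    rw [h1, h2]
    have := hDpos 1 le_rfl le_rfl
    have : 0 < (D 1 + δ) * (D 1 ^ 2 * w) := by positivity
    linarith
  obtain ⟨l, rfl⟩ : ∃ l, n = l + 2 := ⟨n - 2, by omega⟩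
  obtain ⟨hlt, hq⟩ := hn2 (by omega)
  rw [show l + 2 - 1 = l + 1 from rfl] at hlt hq
  by_contra hcon
  push Not at hcon
  -- `E` extends `e_j = D_j D_{j+1} w` geometrically beyond `j = n - 1`; `e` prepends five zeros, so
  -- that the index shifts in `seq_core` need no separate treatment of small `n`.
  let E : ℕ → ℝ := fun i => (9 / 4) ^ (i - (l + 1)) * (D (min i (l + 1)) * D (min i (l + 1) + 1) * w)
  let e : ℕ → ℝ := fun j => if j < 5 then 0 else E (j - 5)
  have hDnn : ∀ i, i ≤ l + 2 → 0 ≤ D i := by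
    intro i hi
    rcases Nat.eq_zero_or_pos i with rfl | h
    · exact hD0.ge
    · exact (hDpos i h hi).le
  have hE0 : ∀ i, 0 ≤ E i := by
    intro i
    have h1 := hDnn (min i (l + 1)) (by omega)
    have h2 := hDnn (min i (l + 1) + 1) (by omega)
    simp only [E]
    positivity
  have hEg : ∀ i, 9 / 4 * E i ≤ E (i + 1) := by
    intro i
    simp only [E]
    by_cases hi : i < l + 1
    · rw [min_eq_left hi.le, min_eq_left (by omega), Nat.sub_eq_zero_of_le hi.le,
        Nat.sub_eq_zero_of_le (by omega)]
      have h1 := hDg i (by omega)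
      have h2 := mul_le_mul_of_nonneg_right h1 (mul_nonneg (hDnn (i + 1) (by omega)) hw.le)
      rw [show i + 1 + 1 = i + 2 from rfl]
      linarith
    · rw [min_eq_right (by omega), min_eq_right (by omega),
        show i + 1 - (l + 1) = i - (l + 1) + 1 by omega, pow_succ]
      apply le_of_eq; ring
  have hEeq : ∀ i, i ≤ l + 1 → E i = D i * D (i + 1) * w := by
    intro i hi
    simp [E, min_eq_left hi, Nat.sub_eq_zero_of_le hi]
  have he0 : ∀ j, 0 ≤ e j := by
    intro j; simp only [e]; split_ifs
    · exact le_rfl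
    · exact hE0 _
  have heg : ∀ j, 9 / 4 * e j ≤ e (j + 1) := by
    intro j
    by_cases hj : j < 5
    · have := he0 (j + 1)
      simpa [e, hj] using this
    · have := hEg (j - 5)
      rw [show j - 5 + 1 = j + 1 - 5 by omega] at this
      simpa [e, hj, show ¬ (j + 1 < 5) by omega] using this
  have hez : ∀ j ≤ 5, e j = 0 := by
    intro j hj
    rcases hj.eq_or_lt with rfl | hj
    · simp [e, E, hD0]
    · simp [e, hj]
  have heq : ∀ j, e (j + 5) = E j := by intro j; simp [e]
  have hB : ∀ j, j ≤ l + 3 → recSeq e (j + 5) = B j := by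
    intro j
    induction j using Nat.twoStepInduction with
    | zero => intro _; simp [hBdef, recSeq, hez]
    | one => intro _; simp [hBdef, recSeq, hez]
    | more i ih _ =>
      intro hi
      have h1 : recSeq e (i + 2 + 5) = 1 - e (i + 5) * recSeq e (i + 5) := rfl
      have h2 : B (i + 2) = 1 - D i * D (i + 1) * w * B i := rfl
      rw [h1, h2, ih (by omega), heq, hEeq i (by omega)]
  have hd := hDpos (l + 1) (by omega) (by omega)
  obtain ⟨hb, hm⟩ := ineq_reduce hd hlt hq hw hcon
  have h3 : e (l + 3 + 3) = D (l + 1) * D (l + 2) * w := by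
    rw [show l + 3 + 3 = (l + 1) + 5 from rfl, heq, hEeq _ le_rfl]
  have h4 : recSeq e (l + 3 + 4) = B (l + 2) := hB (l + 2) (by omega)
  have h5 : recSeq e (l + 3 + 5) = B (l + 2 + 1) := hB (l + 3) (by omega)
  refine seq_core (B := recSeq e) he0 heg hez rfl rfl (fun _ => rfl) (l + 3) ?_ ?_ ?_
  · rw [h3]; have := hDpos (l + 2) (by omega) (by omega); positivity
  · rw [h4]; exact hb
  · rw [h3, h4, h5]; exact hm

/-! ### Growth of the gain ratios -/

/-- Summation by parts turns the form of `FormPos` into a sum of second differences. -/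
lemma form_summation (D : ℕ → ℝ) (hD0 : D 0 = 0) (X : ℕ → ℝ) (n : ℕ) :
    ∑ p ∈ Finset.range n, (X p - X (p + 1)) * (D (p + 1) * X p - D p * X (p - 1))
      = ∑ p ∈ Finset.range n, D (p + 1) * X p * (X p - 2 * X (p + 1) + X (p + 2))
        + (X n - X (n + 1)) * (D n * X (n - 1)) := by
  induction n with
  | zero => simp [hD0]
  | succ n ih =>
    rw [Finset.sum_range_succ, Finset.sum_range_succ, ih, Nat.add_sub_cancel]
    ring

/-- Positivity of the leading part of the form attached to `Σ̄`, in the variables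
`X_p = ∑_{q ≥ p} z_q`. -/
def FormPos (n : ℕ) (D : ℕ → ℝ) : Prop :=
  ∀ X : ℕ → ℝ, (∀ p, n ≤ p → X p = 0) → (∃ p, X p ≠ 0) →
    0 < ∑ p ∈ Finset.range n, (X p - X (p + 1)) * (D (p + 1) * X p - D p * X (p - 1))

lemma FormPos.second_diff {n : ℕ} {D : ℕ → ℝ} (h : FormPos n D) (hD0 : D 0 = 0)
    (X : ℕ → ℝ) (hX : ∀ p, n ≤ p → X p = 0) (hX' : ∃ p, X p ≠ 0) :
    0 < ∑ p ∈ Finset.range n, D (p + 1) * X p * (X p - 2 * X (p + 1) + X (p + 2)) := by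
  have := h X hX hX'
  rw [form_summation D hD0, hX n le_rfl, hX (n + 1) (by omega)] at this
  simpa using this

/-- The form evaluated at the indicator of `p ≤ i`. -/
lemma FormPos.growth_one {n : ℕ} {D : ℕ → ℝ} (h : FormPos n D) (hD0 : D 0 = 0) (i : ℕ)
    (hi : i + 1 ≤ n) : D i < D (i + 1) := by
  have := h.second_diff hD0 (fun p => if p ≤ i then 1 else 0)
    (fun p hp => if_neg (by omega)) ⟨0, by simp⟩
  rw [Finset.sum_congr rfl (g := fun p => (if p = i then D (i + 1) else 0) +
    (if p + 1 = i then -D i else 0)), Finset.sum_add_distrib, Finset.sum_ite_eq',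
    if_pos (Finset.mem_range.2 (by omega))] at this
  · rcases i with _ | i
    · simpa [hD0] using this
    · simp only [Nat.add_right_cancel_iff, Finset.sum_ite_eq', Finset.mem_range] at this
      rw [if_pos (by omega)] at this
      linarith
  · intro p _
    by_cases h1 : p = i
    · subst h1; simp
    · by_cases h2 : p + 1 = i
      · subst h2; norm_num
      · by_cases h3 : p ≤ i
        · simp [h1, h2, h3, show p + 1 ≤ i by omega, show p + 2 ≤ i by omega]; norm_num
        · simp [h1, h2, h3]

/-- The form evaluated at the sequence with slope `1/2` up to `X_i = 2`, followed by `X_{i+1} = 1` and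
zeros. Its second differences vanish except at `p = i - 1`, where the term is `-(3/2)² D_i`, and at
`p = i + 1`, where it is `D_{i+2}`. -/
lemma FormPos.growth_two {n : ℕ} {D : ℕ → ℝ} (h : FormPos n D) (hD0 : D 0 = 0) (i : ℕ)
    (hi : i + 2 ≤ n) : 9 / 4 * D i < D (i + 2) := by
  have := h.second_diff hD0
    (fun p => if p ≤ i then ((p : ℝ) - i + 4) / 2 else if p = i + 1 then 1 else 0)
    (fun p hp => by rw [if_neg (by omega), if_neg (by omega)]) ⟨i + 1, by simp⟩
  rw [Finset.sum_congr rfl (g := fun p => (if p = i + 1 then D (i + 2) else 0) +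
    (if p + 1 = i then -(9 / 4 * D i) else 0)), Finset.sum_add_distrib, Finset.sum_ite_eq',
    if_pos (Finset.mem_range.2 (by omega))] at this
  · rcases i with _ | i
    · simpa [hD0] using this
    · simp only [Nat.add_right_cancel_iff, Finset.sum_ite_eq', Finset.mem_range] at this
      rw [if_pos (by omega)] at this
      linarith
  · intro p _
    by_cases h1 : p = i + 1
    · subst h1; simp [show ¬ (i + 1 + 2 ≤ i) by omega, show ¬ (i + 1 + 1 = i) by omega]
    · by_cases h2 : p + 1 = i
      · subst h2; simp [show p ≠ p + 1 + 1 by omega]; ring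
      · by_cases h4 : p = i
        · subst h4; norm_num
        · by_cases h3 : p ≤ i
          · simp [h1, h2, h3, show p + 1 ≤ i by omega, show p + 2 ≤ i by omega]; right; ring
          · simp [h1, h2, h3]

/-! ### The Kalman–Yakubovich–Popov lemma -/

/-- If `G F* + F G* = 0` then there is an orthonormal basis each of whose vectors `x` satisfies `F x = 0`
or `G x = iω F x` with `ω` real. On the range of `F*`, where `F` is injective, `A = i F⁻¹ G` is well
defined and symmetric; the basis extends an eigenbasis of `A`. -/
lemma exists_pencil_basis {V U : Type*} [NormedAddCommGroup V] [InnerProductSpace ℂ V]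
    [FiniteDimensional ℂ V] [NormedAddCommGroup U] [InnerProductSpace ℂ U] [FiniteDimensional ℂ U]
    (F G : V →ₗ[ℂ] U)
    (h : G ∘ₗ LinearMap.adjoint F + F ∘ₗ LinearMap.adjoint G = 0) :
    ∃ (s : Finset V) (b : OrthonormalBasis s ℂ V), ∀ i,
      F (b i) = 0 ∨ ∃ ω : ℝ, G (b i) = (Complex.I * ω) • F (b i) := by
  classical
  let K : Submodule ℂ V := LinearMap.range (LinearMap.adjoint F)
  have hKperp : ∀ x, x ∈ Kᗮ → F x = 0 := by
    intro x hx
    rw [Submodule.mem_orthogonal] at hx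
    have := hx (LinearMap.adjoint F (F x)) ⟨_, rfl⟩
    rw [LinearMap.adjoint_inner_left] at this
    exact inner_self_eq_zero.1 this
  have hinj : ∀ x ∈ K, F x = 0 → x = 0 := by
    rintro _ ⟨a, rfl⟩ hx
    have h1 : inner ℂ (LinearMap.adjoint F a) (LinearMap.adjoint F a) = 0 := by
      rw [LinearMap.adjoint_inner_left, hx, inner_zero_right]
    exact inner_self_eq_zero.1 h1
  have hGF : ∀ a, G (LinearMap.adjoint F a) = - F (LinearMap.adjoint G a) := by
    intro a
    have := LinearMap.congr_fun h a
    exact eq_neg_of_add_eq_zero_left this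
  let FK : K →ₗ[ℂ] U := F ∘ₗ K.subtype
  have hFKinj : Function.Injective FK := by
    rw [← LinearMap.ker_eq_bot, LinearMap.ker_eq_bot']
    intro x hx
    exact Subtype.ext (hinj x x.2 hx)
  have hmem : ∀ x : K, (Complex.I • (G ∘ₗ K.subtype)) x ∈ LinearMap.range FK := by
    rintro ⟨_, a, rfl⟩
    refine ⟨(-Complex.I) • K.orthogonalProjectionOnto (LinearMap.adjoint G a), ?_⟩
    have h1 := hKperp _ (K.sub_starProjection_mem_orthogonal (LinearMap.adjoint G a))
    rw [map_sub, sub_eq_zero] at h1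
    simp [FK, hGF, ← h1]
  -- `A = i F⁻¹ G` on `K`; `hmem` says that `G` maps `K` into the image of `F` restricted to `K`
  let A : K →ₗ[ℂ] K := (LinearEquiv.ofInjective FK hFKinj).symm.toLinearMap ∘ₗ
    LinearMap.codRestrict _ (Complex.I • (G ∘ₗ K.subtype)) hmem
  have hA : ∀ x : K, F (A x) = Complex.I • G x := by
    intro x
    have : FK (A x) = _ := congrArg Subtype.val ((LinearEquiv.ofInjective FK hFKinj).apply_symm_apply
      (LinearMap.codRestrict _ (Complex.I • (G ∘ₗ K.subtype)) hmem x))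
    exact this
  have hsym : A.IsSymmetric := by
    rintro ⟨_, a, rfl⟩ ⟨_, c, rfl⟩
    rw [Submodule.coe_inner, Submodule.coe_inner]
    simp only
    rw [LinearMap.adjoint_inner_right, LinearMap.adjoint_inner_left, hA, hA]
    simp only [inner_smul_left, inner_smul_right, Complex.conj_I]
    rw [hGF a, inner_neg_left, ← LinearMap.adjoint_inner_right, LinearMap.adjoint_inner_left]
    ring
  let v := hsym.eigenvectorBasis rfl
  have hv : Orthonormal ℂ (fun i => (v i : V)) := by
    have := v.orthonormal
    exact this.comp_linearIsometry K.subtypeₗᵢ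
  obtain ⟨s, b, hvs, hb⟩ := Orthonormal.exists_orthonormalBasis_extension hv.toSubtypeRange
  refine ⟨s, b, fun i => ?_⟩
  have hbi : b i = (i : V) := congrFun hb i
  by_cases hi : (i : V) ∈ Set.range (fun i => (v i : V))
  · right
    obtain ⟨j, hj⟩ := hi
    have he := (hsym.hasEigenvector_eigenvectorBasis rfl j).apply_eq_smul
    refine ⟨-hsym.eigenvalues rfl j, ?_⟩
    have h1 := hA (v j)
    change A (v j) = _ at he
    rw [he] at h1
    rw [hbi, ← hj]
    have h2 : G (v j) = -Complex.I • (Complex.I • G (v j)) := by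
      rw [smul_smul]; simp
    rw [h2, ← h1]
    change -Complex.I • F ((((hsym.eigenvalues rfl j : ℝ) : ℂ)) • (v j : V)) = _
    rw [map_smul, smul_smul]
    simp
  · left
    apply hKperp
    rw [Submodule.mem_orthogonal']
    intro x hx
    have hx' : (⟨x, hx⟩ : K) = ∑ j, inner ℂ (v j) (⟨x, hx⟩ : K) • v j := (v.sum_repr' _).symm
    have hx2 : x = ∑ j, inner ℂ (v j) (⟨x, hx⟩ : K) • (v j : V) := by
      have := congrArg K.subtype hx'
      simpa using this
    rw [hx2, inner_sum]
    refine Finset.sum_eq_zero fun j _ => ?_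
    rw [inner_smul_right]
    have hjs : (v j : V) ∈ s := hvs ⟨j, rfl⟩
    have : inner ℂ (b i) (b ⟨_, hjs⟩) = 0 := by
      rw [OrthonormalBasis.inner_eq_ite, if_neg]
      intro hc
      apply hi
      exact ⟨j, by rw [hc]⟩
    rw [hb] at this
    rw [hbi, this, mul_zero]

open Complex in
/-- The dual form of `kyp`: a positive semidefinite `Z` with `T Z Sᵀ + S Z Tᵀ = 0` and `tr (Q Z) ≤ 0`
vanishes. Factor `Z = C Cᴴ` and apply `exists_pencil_basis` to `F = S C`, `G = T C`: then `tr (Q Z)` is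
the sum of the form `Q` over the vectors `C b_i`, at which it is positive unless `C b_i = 0`. -/
lemma kyp_dual {ι κ : Type*} [Fintype ι] [Fintype κ] [DecidableEq ι] [DecidableEq κ]
    (Q : Matrix κ κ ℝ) (S T : Matrix ι κ ℝ)
    (hpos : ∀ x : κ → ℂ, x ≠ 0 → (S.map ofReal *ᵥ x = 0 ∨
      ∃ ω : ℝ, T.map ofReal *ᵥ x = (I * ω) • (S.map ofReal *ᵥ x)) →
      0 < (star x ⬝ᵥ (Q.map ofReal *ᵥ x)).re)
    (Z : Matrix κ κ ℝ) (hZ : Z.PosSemidef) (hR : T * Z * Sᵀ + S * Z * Tᵀ = 0)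
    (hQ : (Q * Z).trace ≤ 0) : Z = 0 := by
  open scoped MatrixOrder in
  obtain ⟨R, hZR⟩ := CStarAlgebra.nonneg_iff_eq_star_mul_self.mp hZ.nonneg
  replace hZR : Z = Rᵀ * R := by rw [hZR]; rfl
  let C : Matrix κ κ ℂ := Rᵀ.map ofReal
  let Sc : Matrix ι κ ℂ := S.map ofReal
  let Tc : Matrix ι κ ℂ := T.map ofReal
  let Qc : Matrix κ κ ℂ := Q.map ofReal
  have hCH : Cᴴ = R.map ofReal := by ext i j; simp [C]
  have hSH : Scᴴ = Sᵀ.map ofReal := by ext i j; simp [Sc]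
  have hTH : Tcᴴ = Tᵀ.map ofReal := by ext i j; simp [Tc]
  have hCC : C * Cᴴ = Z.map ofReal := by
    rw [hCH, hZR]
    exact (Matrix.map_mul (f := ofRealHom)).symm
  have hRc : (Tc * C) * (Sc * C)ᴴ + (Sc * C) * (Tc * C)ᴴ = 0 := by
    have h1 : ((T * Z * Sᵀ + S * Z * Tᵀ).map ofRealHom) = 0 := by rw [hR]; ext; simp
    rw [Matrix.map_add _ (map_add _), Matrix.map_mul, Matrix.map_mul, Matrix.map_mul, Matrix.map_mul] at h1
    rw [conjTranspose_mul, conjTranspose_mul, Matrix.mul_assoc Tc, ← Matrix.mul_assoc C, hCC,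
      Matrix.mul_assoc Sc, ← Matrix.mul_assoc C, hCC, hSH, hTH, ← Matrix.mul_assoc, ← Matrix.mul_assoc]
    exact h1
  obtain ⟨s, b, hb⟩ := exists_pencil_basis (Matrix.toEuclideanLin (Sc * C))
    (Matrix.toEuclideanLin (Tc * C)) (by
      rw [← Matrix.toEuclideanLin_conjTranspose_eq_adjoint,
        ← Matrix.toEuclideanLin_conjTranspose_eq_adjoint]
      rw [← Matrix.toLpLin_mul, ← Matrix.toLpLin_mul, ← map_add, hRc, map_zero])
  have htr : ∑ i, star (C *ᵥ (b i).ofLp) ⬝ᵥ (Qc *ᵥ (C *ᵥ (b i).ofLp)) = (((Q * Z).trace : ℝ) : ℂ) := by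
    have h1 := LinearMap.trace_eq_sum_inner (Matrix.toEuclideanLin (Cᴴ * Qc * C)) b
    have h2 : LinearMap.trace ℂ _ (Matrix.toEuclideanLin (Cᴴ * Qc * C)) = (((Q * Z).trace : ℝ) : ℂ) := by
      have h3 : (((Q * Z).trace : ℝ) : ℂ) = (Qc * (C * Cᴴ)).trace := by
        rw [hCC]
        have : Qc * Z.map ofReal = (Q * Z).map ofRealHom := (Matrix.map_mul (f := ofRealHom)).symm
        rw [this]
        simp only [Matrix.trace, Matrix.diag_apply, ofReal_sum]
        rfl
      have h4 : Matrix.toEuclideanLin (Cᴴ * Qc * C) =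
        Matrix.toLin (PiLp.basisFun 2 ℂ κ) (PiLp.basisFun 2 ℂ κ) (Cᴴ * Qc * C) := rfl
      rw [h3, h4, Matrix.trace_toLin_eq, Matrix.mul_assoc, Matrix.trace_mul_comm,
        Matrix.mul_assoc]
    rw [← h2, h1]
    refine Finset.sum_congr rfl fun i _ => ?_
    rw [EuclideanSpace.inner_eq_star_dotProduct, Matrix.toLpLin_apply, star_mulVec,
      ← Matrix.mulVec_mulVec, ← Matrix.mulVec_mulVec, ← Matrix.dotProduct_mulVec, dotProduct_comm]
  have hC0 : ∀ i, C *ᵥ (b i).ofLp = 0 := by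
    have hterm : ∀ i, C *ᵥ (b i).ofLp ≠ 0 → 0 < (star (C *ᵥ (b i).ofLp) ⬝ᵥ (Qc *ᵥ (C *ᵥ (b i).ofLp))).re := by
      intro i hi
      refine hpos _ hi ?_
      rcases hb i with h | ⟨ω, h⟩
      · left
        have := congrArg WithLp.ofLp h
        simpa [Matrix.toEuclideanLin, Matrix.mulVec_mulVec] using this
      · right
        refine ⟨ω, ?_⟩
        have := congrArg WithLp.ofLp h
        simpa [Matrix.toEuclideanLin, Matrix.mulVec_mulVec] using this
    have hre := congrArg Complex.re htr
    rw [Complex.re_sum, ofReal_re] at hre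
    by_contra hne
    push Not at hne
    obtain ⟨i, hi⟩ := hne
    have : 0 < ∑ i, (star (C *ᵥ (b i).ofLp) ⬝ᵥ (Qc *ᵥ (C *ᵥ (b i).ofLp))).re := by
      refine Finset.sum_pos' (fun j _ => ?_) ⟨i, Finset.mem_univ _, hterm i hi⟩
      by_cases hj : C *ᵥ (b j).ofLp = 0
      · simp [hj]
      · exact (hterm j hj).le
    linarith
  have hC : Matrix.toEuclideanLin C = 0 := by
    refine b.toBasis.ext fun i => ?_
    have := hC0 i
    simp [Matrix.toLpLin_apply, this]
  have hC' : C = 0 := by simpa using hC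
  rw [hC', Matrix.zero_mul] at hCC
  ext i j
  have := congrFun (congrFun hCC i) j
  simpa using this.symm

lemma smul_dotProduct_mulVec_smul {κ : Type*} [Fintype κ] (K : Matrix κ κ ℝ) (r : ℝ) (x : κ → ℝ) :
    (r • x) ⬝ᵥ (K *ᵥ (r • x)) = r ^ 2 * (x ⬝ᵥ (K *ᵥ x)) := by
  rw [Matrix.mulVec_smul, smul_dotProduct, dotProduct_smul, smul_eq_mul, smul_eq_mul]; ring

lemma pos_of_sphere {κ : Type*} [Fintype κ] {K : Matrix κ κ ℝ}
    (h : ∀ x ∈ Metric.sphere (0 : κ → ℝ) 1, 0 < x ⬝ᵥ (K *ᵥ x)) (x : κ → ℝ) (hx : x ≠ 0) :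
    0 < x ⬝ᵥ (K *ᵥ x) := by
  have h1 := h (‖x‖⁻¹ • x) (by simp [norm_smul, hx])
  rw [smul_dotProduct_mulVec_smul] at h1
  exact pos_of_mul_pos_right h1 (by positivity)

lemma isOpen_posForm {κ : Type*} [Fintype κ] :
    IsOpen {K : Matrix κ κ ℝ | ∀ x : κ → ℝ, x ≠ 0 → 0 < x ⬝ᵥ (K *ᵥ x)} := by
  rw [isOpen_iff_mem_nhds]
  intro K hK
  have : ∀ᶠ L in nhds K, ∀ x ∈ Metric.sphere (0 : κ → ℝ) 1, 0 < x ⬝ᵥ (L *ᵥ x) := by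
    refine (isCompact_sphere (0 : κ → ℝ) 1).eventually_forall_of_forall_eventually
      (P := fun L x => 0 < x ⬝ᵥ (L *ᵥ x)) fun x hx => ?_
    have hc : Continuous fun z : Matrix κ κ ℝ × (κ → ℝ) => z.2 ⬝ᵥ (z.1 *ᵥ z.2) := by
      fun_prop
    refine hc.continuousAt.eventually (lt_mem_nhds (hK x ?_))
    rintro rfl
    simp at hx
  filter_upwards [this] with L hL
  exact pos_of_sphere hL

/-- Kalman–Yakubovich–Popov lemma: positivity of `Re ⟨x, Q x⟩` at the complex solutions of `S x = 0` and
of `T x = iω S x` yields a symmetric `H` with `⟨x, Q x⟩ - ⟨S x, H T x⟩ > 0` for all real `x ≠ 0`.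
Otherwise Hahn–Banach separates the open cone of matrices with positive form from the affine space
`{Q - Sᵀ (J + Jᵀ) T}`; the separating functional is `K ↦ -tr (K Z)` with `Z` as in `kyp_dual`. -/
lemma kyp {ι κ : Type*} [Fintype ι] [Fintype κ] [DecidableEq ι] [DecidableEq κ]
    (Q : Matrix κ κ ℝ) (S T : Matrix ι κ ℝ)
    (hpos : ∀ x : κ → ℂ, x ≠ 0 → (S.map Complex.ofReal *ᵥ x = 0 ∨
      ∃ ω : ℝ, T.map Complex.ofReal *ᵥ x = (Complex.I * ω) • (S.map Complex.ofReal *ᵥ x)) →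
      0 < (star x ⬝ᵥ (Q.map Complex.ofReal *ᵥ x)).re) :
    ∃ H : Matrix ι ι ℝ, H.IsSymm ∧
      ∀ x : κ → ℝ, x ≠ 0 → 0 < x ⬝ᵥ (Q *ᵥ x) - (S *ᵥ x) ⬝ᵥ (H *ᵥ (T *ᵥ x)) := by
  by_contra hcon
  push Not at hcon
  let L : Matrix ι ι ℝ → Matrix κ κ ℝ := fun J => Sᵀ * (J + Jᵀ) * T
  have hLform : ∀ J x, x ⬝ᵥ (L J *ᵥ x) = (S *ᵥ x) ⬝ᵥ ((J + Jᵀ) *ᵥ (T *ᵥ x)) := by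
    intro J x
    rw [← Matrix.mulVec_mulVec, ← Matrix.mulVec_mulVec, Matrix.dotProduct_mulVec, vecMul_transpose]
  have hLadd : ∀ J J', L (J + J') = L J + L J' := by
    intro J J'; simp only [L, transpose_add, Matrix.mul_add, Matrix.add_mul]; abel
  have hLsmul : ∀ (r : ℝ) J, L (r • J) = r • L J := by
    intro r J; simp only [L, transpose_smul, ← smul_add, Matrix.mul_smul, Matrix.smul_mul]
  let C : Set (Matrix κ κ ℝ) := {K | ∀ x : κ → ℝ, x ≠ 0 → 0 < x ⬝ᵥ (K *ᵥ x)}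
  have hCc : Convex ℝ C := by
    intro K hK K' hK' a b ha hb hab x hx
    rw [Matrix.add_mulVec, Matrix.smul_mulVec, Matrix.smul_mulVec, dotProduct_add, dotProduct_smul,
      dotProduct_smul, smul_eq_mul, smul_eq_mul]
    have h1 := hK x hx
    have h2 := hK' x hx
    rcases ha.eq_or_lt with rfl | ha
    · have : b = 1 := by linarith
      subst this; linarith
    · have := mul_pos ha h1
      have := mul_nonneg hb h2.le
      linarith
  have hAc : Convex ℝ (Set.range fun J => Q - L J) := by
    rintro _ ⟨J, rfl⟩ _ ⟨J', rfl⟩ a b _ _ hab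
    refine ⟨a • J + b • J', ?_⟩
    simp only [hLadd, hLsmul, smul_sub]
    have : Q = a • Q + b • Q := by rw [← add_smul, hab, one_smul]
    nth_rewrite 1 [this]
    abel
  have hdisj : Disjoint C (Set.range fun J => Q - L J) := by
    rw [Set.disjoint_left]
    rintro _ hC ⟨J, rfl⟩
    obtain ⟨x, hx, hle⟩ := hcon (J + Jᵀ) (by simp [Matrix.IsSymm, add_comm])
    have := hC x hx
    rw [Matrix.sub_mulVec, dotProduct_sub, hLform] at this
    linarith
  obtain ⟨f, u, hf1, hf2⟩ := geometric_hahn_banach_open hCc isOpen_posForm hAc hdisj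
  have hCsmul : ∀ K ∈ C, ∀ r : ℝ, 0 < r → r • K ∈ C := by
    intro K hK r hr x hx
    rw [Matrix.smul_mulVec, dotProduct_smul]
    exact mul_pos hr (hK x hx)
  have hone : (1 : Matrix κ κ ℝ) ∈ C := by
    intro x hx
    rw [Matrix.one_mulVec]
    exact lt_of_le_of_ne (Finset.sum_nonneg fun i _ => mul_self_nonneg _)
      (fun h => hx (dotProduct_self_eq_zero.1 h.symm))
  -- `C` is a cone, so `f ≤ 0` on it and the separating constant is nonnegative
  have hu0 : 0 ≤ u := by
    by_contra hu
    push Not at hu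
    have h1 : ∀ r : ℝ, 0 < r → r * f 1 < u := by
      intro r hr
      have := hf1 _ (hCsmul 1 hone r hr)
      rwa [map_smul] at this
    have h2 := h1 1 one_pos
    have h3 := h1 (u / (2 * f 1)) (div_pos_of_neg_of_neg hu (by linarith))
    have h4 : f 1 ≠ 0 := by intro h; rw [h] at h2; linarith
    have : u / (2 * f 1) * f 1 = u / 2 := by field_simp
    linarith
  have hfC : ∀ K ∈ C, f K ≤ 0 := by
    intro K hK
    by_contra h
    push Not at h
    have := hf1 _ (hCsmul K hK ((u + 1) / f K) (by positivity))
    rw [map_smul, smul_eq_mul, div_mul_cancel₀ _ h.ne'] at this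
    linarith
  have hfpsd : ∀ K : Matrix κ κ ℝ, (∀ x : κ → ℝ, 0 ≤ x ⬝ᵥ (K *ᵥ x)) → f K ≤ 0 := by
    intro K hK
    have h1 : ∀ r : ℝ, 0 < r → f K + r * f 1 ≤ 0 := by
      intro r hr
      have := hfC (K + r • 1) (fun x hx => by
        rw [Matrix.add_mulVec, dotProduct_add]
        have := hCsmul 1 hone r hr x hx
        have := hK x
        linarith)
      rwa [map_add, map_smul] at this
    by_contra h
    push Not at h
    have h2 := hfC 1 hone
    have h3 := h1 1 one_pos
    have h5 : f 1 < 0 := by linarith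
    have h4 := h1 (f K / (2 * (-f 1))) (div_pos h (by linarith))
    have : f K / (2 * (-f 1)) * f 1 = - f K / 2 := by
      have := h5.ne
      field_simp
    linarith
  -- `f` is bounded below on the affine space, hence constant on it
  have hfA : ∀ J, f (L J) = 0 := by
    intro J
    have h1 : ∀ r : ℝ, u ≤ f Q - r * f (L J) := by
      intro r
      have : u ≤ f (Q - L (r • J)) := hf2 _ ⟨r • J, rfl⟩
      rwa [hLsmul, map_sub, map_smul] at this
    by_contra h
    have h2 := h1 ((f Q - u + 1) / f (L J))
    rw [div_mul_cancel₀ _ h] at h2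
    linarith
  have hfQ : u ≤ f Q := by
    have := hf2 _ ⟨0, rfl⟩
    simpa [L] using this
  -- the matrix representing `-f` for the trace pairing
  let Z : Matrix κ κ ℝ := Matrix.of fun i j => - f (Matrix.single i j 1)
  have hZsymm : Zᵀ = Z := by
    ext i j
    have h1 : ∀ i j, f (Matrix.single i j 1) ≤ f (Matrix.single j i 1) := by
      intro i j
      have := hfpsd (Matrix.single i j 1 - Matrix.single j i 1) (fun x => by
        rw [Matrix.sub_mulVec, dotProduct_sub]
        simp [Matrix.single_mulVec, dotProduct, Function.update_apply, mul_comm])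
      rw [map_sub] at this
      linarith
    simp [Z, le_antisymm (h1 i j) (h1 j i)]
  have hfZ : ∀ K, f K = - (K * Z).trace := by
    intro K
    conv_lhs => rw [Matrix.matrix_eq_sum_single K]
    rw [← hZsymm]
    simp only [map_sum, Matrix.trace, Matrix.diag_apply, Matrix.mul_apply, Z, transpose_apply, of_apply]
    rw [← Finset.sum_neg_distrib]
    refine Finset.sum_congr rfl fun i _ => ?_
    rw [← Finset.sum_neg_distrib]
    refine Finset.sum_congr rfl fun j _ => ?_
    have : Matrix.single i j (K i j) = K i j • Matrix.single i j (1 : ℝ) := by simp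
    rw [this, map_smul, smul_eq_mul]; ring
  have hZpsd : Z.PosSemidef := by
    refine Matrix.PosSemidef.of_dotProduct_mulVec_nonneg ?_ fun x => ?_
    · rw [Matrix.IsHermitian, conjTranspose_eq_transpose_of_trivial, hZsymm]
    · have h1 := hfpsd (vecMulVec x x) (fun y => by
        rw [vecMulVec_mulVec]
        simp [dotProduct_comm y x]
        exact mul_self_nonneg _)
      rw [hfZ, vecMulVec_mul, trace_vecMulVec] at h1
      rw [star_trivial, dotProduct_mulVec, dotProduct_comm]
      linarith
  have hR : T * Z * Sᵀ + S * Z * Tᵀ = 0 := by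
    have hJ : ∀ J : Matrix ι ι ℝ, (J * (T * Z * Sᵀ + S * Z * Tᵀ)).trace = 0 := by
      intro J
      have h1 := hfA J
      rw [hfZ, neg_eq_zero] at h1
      have h2 : (Sᵀ * J * T * Z).trace = (J * (T * Z * Sᵀ)).trace := by
        rw [Matrix.mul_assoc, Matrix.mul_assoc, Matrix.trace_mul_comm]
        simp only [Matrix.mul_assoc]
      have h3 : (Sᵀ * Jᵀ * T * Z).trace = (J * (S * Z * Tᵀ)).trace := by
        rw [← Matrix.trace_transpose]
        simp only [transpose_mul, transpose_transpose, hZsymm]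
        rw [← Matrix.mul_assoc Z, Matrix.trace_mul_comm (Z * Tᵀ)]
        simp only [Matrix.mul_assoc]
      simp only [L, Matrix.mul_add, Matrix.add_mul, Matrix.trace_add] at h1
      rw [Matrix.mul_add, Matrix.trace_add, ← h2, ← h3, h1]
    have := hJ (T * Z * Sᵀ + S * Z * Tᵀ)ᵀ
    rw [← conjTranspose_eq_transpose_of_trivial] at this
    exact Matrix.trace_conjTranspose_mul_self_eq_zero_iff.1 this
  have hZ0 := kyp_dual Q S T hpos Z hZpsd hR (by have := hfZ Q; linarith)
  have h1 := hf1 1 hone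
  have h2 := hfZ Q
  rw [hfZ, hZ0] at h1
  rw [hZ0] at h2
  simp at h1 h2
  linarith

/-! ### The frequency condition for the difference and drift matrices -/

/-- The extension by zero of a vector indexed by `Fin (n + 1)` to a sequence. -/
def extZero {R : Type*} [Zero R] {n : ℕ} (x : Fin (n + 1) → R) (p : ℕ) : R :=
  if h : p < n + 1 then x ⟨p, h⟩ else 0

lemma extZero_val {R : Type*} [Zero R] {n : ℕ} (x : Fin (n + 1) → R) (p : Fin (n + 1)) :
    extZero x p = x p := by
  unfold extZero
  rw [dif_pos p.2]

/-- Matrix of `X ↦ (X_p - X_{p+1})_{p < n}`. -/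
def diffMat (n : ℕ) : Matrix (Fin n) (Fin (n + 1)) ℝ :=
  Matrix.of fun p j => (if j = p.castSucc then 1 else 0) - (if j = p.succ then 1 else 0)

/-- Matrix of `X ↦ (D_p X_{p-1} - D_{p+1} X_p)_{p < n}`. -/
def driftMat (n : ℕ) (D : ℕ → ℝ) : Matrix (Fin n) (Fin (n + 1)) ℝ :=
  Matrix.of fun p j => (if (j : ℕ) = (p : ℕ) - 1 then D p else 0)
    - (if j = p.castSucc then D (p + 1) else 0)

/-- Matrix of the form `X ↦ d X_n² - D_n X_{n-1} X_n`. -/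
def costMat (n : ℕ) (D : ℕ → ℝ) (d : ℝ) : Matrix (Fin (n + 1)) (Fin (n + 1)) ℝ :=
  Matrix.of fun i j => if (i : ℕ) = n then
    (if (j : ℕ) = n then d else 0) - (if (j : ℕ) = n - 1 then D n else 0) else 0

lemma sum_ite_val_extZero {R : Type*} [CommRing R] {n : ℕ} (x : Fin (n + 1) → R) (c : R) (m : ℕ) (hm : m ≤ n) :
    ∑ j : Fin (n + 1), (if (j : ℕ) = m then c else 0) * x j = c * extZero x m := by
  rw [Finset.sum_eq_single ⟨m, by omega⟩]
  · simp [extZero, show m < n + 1 by omega]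
  · intro j _ hj
    rw [if_neg (fun h => hj (Fin.ext h)), zero_mul]
  · simp

section Actions

variable {R : Type*} [CommRing R] [Algebra ℝ R] {n : ℕ}

lemma diffMat_mulVec (x : Fin (n + 1) → R) (p : Fin n) :
    ((diffMat n).map (algebraMap ℝ R) *ᵥ x) p = extZero x p - extZero x (p + 1) := by
  simp only [Matrix.mulVec, dotProduct, diffMat, Matrix.map_apply, Matrix.of_apply, map_sub,
    sub_mul, Finset.sum_sub_distrib, apply_ite (algebraMap ℝ R), map_one, map_zero, Fin.ext_iff,
    Fin.val_castSucc, Fin.val_succ]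
  rw [sum_ite_val_extZero _ _ _ (by omega), sum_ite_val_extZero _ _ _ (by omega), one_mul, one_mul]

lemma driftMat_mulVec (D : ℕ → ℝ) (x : Fin (n + 1) → R) (p : Fin n) :
    ((driftMat n D).map (algebraMap ℝ R) *ᵥ x) p =
      algebraMap ℝ R (D p) * extZero x (p - 1) - algebraMap ℝ R (D (p + 1)) * extZero x p := by
  simp only [Matrix.mulVec, dotProduct, driftMat, Matrix.map_apply, Matrix.of_apply, map_sub,
    sub_mul, Finset.sum_sub_distrib, apply_ite (algebraMap ℝ R), map_zero, Fin.ext_iff,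
    Fin.val_castSucc]
  rw [sum_ite_val_extZero _ _ _ (by omega), sum_ite_val_extZero _ _ _ (by omega)]

lemma costMat_form (D : ℕ → ℝ) (d : ℝ) (x y : Fin (n + 1) → R) :
    y ⬝ᵥ ((costMat n D d).map (algebraMap ℝ R) *ᵥ x) = extZero y n *
      (algebraMap ℝ R d * extZero x n - algebraMap ℝ R (D n) * extZero x (n - 1)) := by
  have h : ∀ i : Fin (n + 1), ((costMat n D d).map (algebraMap ℝ R) *ᵥ x) i =
      if (i : ℕ) = n then
        algebraMap ℝ R d * extZero x n - algebraMap ℝ R (D n) * extZero x (n - 1) else 0 := by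
    intro i
    by_cases hi : (i : ℕ) = n
    · simp only [Matrix.mulVec, dotProduct, costMat, Matrix.map_apply, Matrix.of_apply, map_sub,
        sub_mul, Finset.sum_sub_distrib, apply_ite (algebraMap ℝ R), map_zero, if_pos hi]
      rw [sum_ite_val_extZero _ _ _ le_rfl, sum_ite_val_extZero _ _ _ (by omega)]
    · simp [Matrix.mulVec, dotProduct, costMat, hi]
  simp only [dotProduct, h]
  have := sum_ite_val_extZero y
    (algebraMap ℝ R d * extZero x n - algebraMap ℝ R (D n) * extZero x (n - 1)) n le_rfl
  rw [mul_comm (extZero y n), ← this]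
  exact Finset.sum_congr rfl fun i _ => mul_comm _ _

end Actions

lemma extZero_star {n : ℕ} (x : Fin (n + 1) → ℂ) (p : ℕ) :
    extZero (star x) p = star (extZero x p) := by
  unfold extZero
  split_ifs <;> simp

lemma exists_extZero_ne {R : Type*} [Zero R] {n : ℕ} {x : Fin (n + 1) → R} (hx : x ≠ 0) :
    ∃ p ≤ n, extZero x p ≠ 0 := by
  obtain ⟨p, hp⟩ := Function.ne_iff.1 hx
  exact ⟨p, by omega, by rwa [extZero_val]⟩

/-- Closed form, in terms of `recSeq`, of the vectors with `T X = iω S X`, `ω ≠ 0`. Such a vector satisfies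
`iω X_p = v + D_p X_{p-1}` with `v = iω X_0`. -/
lemma freq_solution (n : ℕ) (D : ℕ → ℝ) (hD0 : D 0 = 0) (ω : ℝ) (hω : ω ≠ 0) (X : ℕ → ℂ)
    (v : ℂ) (hX : ∀ p ≤ n, Complex.I * ω * X p = v + D p * X (p - 1)) (p : ℕ) (hp : p ≤ n) :
    let B := recSeq fun j => D j * D (j + 1) * (ω ^ 2)⁻¹
    X p = v * (-(D p * (ω ^ 2)⁻¹ * B p : ℝ) - Complex.I * (B (p + 1) * ω⁻¹ : ℝ)) := by
  intro B
  have hωc : (ω : ℂ) ≠ 0 := by exact_mod_cast hω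
  have key : ∀ y z : ℂ, Complex.I * ω * y = Complex.I * ω * z → y = z := fun y z h =>
    mul_left_cancel₀ (mul_ne_zero Complex.I_ne_zero hωc) h
  induction p with
  | zero =>
    have h1 : B (0 + 1) = 1 := rfl
    apply key
    rw [hX 0 hp, h1, hD0]
    push_cast
    field_simp
    linear_combination (v * ω) * Complex.I_sq
  | succ p ih =>
    apply key
    rw [hX _ hp, Nat.add_sub_cancel, ih (by omega)]
    have h1 : B (p + 1 + 1) = 1 - D p * D (p + 1) * (ω ^ 2)⁻¹ * B p := rfl
    rw [h1]
    push_cast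
    field_simp
    linear_combination (v * (ω ^ 2 - D p * D (p + 1) * B p)) * Complex.I_sq

/-- The hypothesis of `kyp` for the matrices `costMat`, `diffMat`, `driftMat`. -/
lemma freq_cond (n : ℕ) (D : ℕ → ℝ) (hD0 : D 0 = 0)
    (hDpos : ∀ i, 1 ≤ i → i ≤ n → 0 < D i) (hDg : ∀ i, i + 2 ≤ n → 9 / 4 * D i ≤ D (i + 2))
    (δ : ℝ) (hδ : 0 < δ)
    (hn2 : 2 ≤ n → D (n - 1) < D n ∧ D n ^ 2 < 4 * (D n - D (n - 1)) * δ)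
    (x : Fin (n + 1) → ℂ) (hx : x ≠ 0)
    (h : (diffMat n).map Complex.ofReal *ᵥ x = 0 ∨ ∃ ω : ℝ,
      (driftMat n D).map Complex.ofReal *ᵥ x
        = (Complex.I * ω) • ((diffMat n).map Complex.ofReal *ᵥ x)) :
    0 < (star x ⬝ᵥ ((costMat n D (D n + δ)).map Complex.ofReal *ᵥ x)).re := by
  have hS : ∀ p : Fin n, ((diffMat n).map Complex.ofReal *ᵥ x) p
    = extZero x p - extZero x (p + 1) := diffMat_mulVec x
  have hT : ∀ p : Fin n, ((driftMat n D).map Complex.ofReal *ᵥ x) p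
    = (D p : ℂ) * extZero x (p - 1) - (D (p + 1) : ℂ) * extZero x p := driftMat_mulVec D x
  have hQ : star x ⬝ᵥ ((costMat n D (D n + δ)).map Complex.ofReal *ᵥ x) = extZero (star x) n *
      (((D n + δ : ℝ) : ℂ) * extZero x n - (D n : ℂ) * extZero x (n - 1)) := costMat_form _ _ _ _
  rw [hQ, extZero_star]
  obtain ⟨p₀, hp₀, hne⟩ := exists_extZero_ne hx
  generalize extZero x = X at *
  have hDn : 0 ≤ D n := by
    rcases Nat.eq_zero_or_pos n with rfl | h'
    · exact hD0.ge
    · exact (hDpos n h' le_rfl).le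
  rcases h with h | ⟨ω, h⟩
  · have hstep : ∀ p < n, X p = X (p + 1) := by
      intro p hp
      have := hS ⟨p, hp⟩
      rw [h] at this
      exact sub_eq_zero.1 this.symm
    have hconst : ∀ p ≤ n, X p = X 0 := by
      intro p
      induction p with
      | zero => simp
      | succ p ih => intro hp; rw [← hstep p (by omega), ih (by omega)]
    rw [hconst n le_rfl, hconst (n - 1) (by omega)]
    rw [hconst p₀ hp₀] at hne
    have h1 : star (X 0) * (((D n + δ : ℝ) : ℂ) * X 0 - (D n : ℂ) * X 0)
        = ((δ * Complex.normSq (X 0) : ℝ) : ℂ) := by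
      push_cast
      rw [← Complex.mul_conj, Complex.star_def]
      ring
    rw [h1, Complex.ofReal_re]
    exact mul_pos hδ (Complex.normSq_pos.2 hne)
  · -- telescoping `T X = iω S X`
    have hX : ∀ p ≤ n, Complex.I * ω * X p = Complex.I * ω * X 0 + D p * X (p - 1) := by
      intro p
      induction p with
      | zero => intro _; simp [hD0]
      | succ p ih =>
        intro hp
        have h1 := congrFun h ⟨p, hp⟩
        rw [hT, Pi.smul_apply, hS, smul_eq_mul] at h1
        have h2 := ih (by omega)
        simp only at h1
        rw [Nat.add_sub_cancel]
        linear_combination h2 + h1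
    by_cases hω : ω = 0
    · subst hω
      have hz : ∀ p, p < n → X p = 0 := by
        intro p hp
        have := hX (p + 1) hp
        simp only [Complex.ofReal_zero, mul_zero, zero_mul, zero_add, Nat.add_sub_cancel] at this
        have hD : (D (p + 1) : ℂ) ≠ 0 := by exact_mod_cast (hDpos (p + 1) (by omega) hp).ne'
        exact (mul_eq_zero.1 this.symm).resolve_left hD
      have hXn : X n ≠ 0 := by
        rcases hp₀.eq_or_lt with rfl | h'
        · exact hne
        · exact absurd (hz _ h') hne
      have hDX : (D n : ℂ) * X (n - 1) = 0 := by
        rcases Nat.eq_zero_or_pos n with rfl | h'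
        · simp [hD0]
        · rw [hz _ (by omega), mul_zero]
      have h1 : star (X n) * (((D n + δ : ℝ) : ℂ) * X n - (D n : ℂ) * X (n - 1))
          = (((D n + δ) * Complex.normSq (X n) : ℝ) : ℂ) := by
        rw [hDX]
        push_cast
        rw [← Complex.mul_conj, Complex.star_def]
        ring
      rw [h1, Complex.ofReal_re]
      exact mul_pos (by linarith) (Complex.normSq_pos.2 hXn)
    · have hsol := freq_solution n D hD0 ω hω X _ hX
      have hw : 0 < (ω ^ 2)⁻¹ := by positivity
      have hineq : let B := recSeq fun j => D j * D (j + 1) * (ω ^ 2)⁻¹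
          D n * B n < (D n + δ) * (D n ^ 2 * (ω ^ 2)⁻¹ * B n ^ 2 + B (n + 1) ^ 2) := by
        rcases Nat.eq_zero_or_pos n with rfl | h'
        · simp [hD0, recSeq, hδ]
        · exact freq_ineq n h' D hD0 hDpos hDg δ hδ hn2 _ hw
      simp only at hsol hineq
      generalize (recSeq fun j => D j * D (j + 1) * (ω ^ 2)⁻¹) = B at hsol hineq
      have hv : Complex.I * ω * X 0 ≠ 0 := by
        intro hv
        apply hne
        rw [hsol p₀ hp₀, hv, zero_mul]
      have hDX : (D n : ℂ) * X (n - 1) = Complex.I * ω * X n - Complex.I * ω * X 0 := by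
        rw [hX n le_rfl]; ring
      have hXn := hsol n le_rfl
      rw [hDX]
      generalize Complex.I * ω * X 0 = v at *
      rw [hXn]
      have h1 : (star (v * (-((D n * (ω ^ 2)⁻¹ * B n : ℝ) : ℂ) - Complex.I * (B (n + 1) * ω⁻¹ : ℝ))) *
          (((D n + δ : ℝ) : ℂ) * (v * (-((D n * (ω ^ 2)⁻¹ * B n : ℝ) : ℂ) - Complex.I * (B (n + 1) * ω⁻¹ : ℝ)))
          - (Complex.I * ω * (v * (-((D n * (ω ^ 2)⁻¹ * B n : ℝ) : ℂ) - Complex.I * (B (n + 1) * ω⁻¹ : ℝ))) - v))).re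
          = Complex.normSq v * (ω ^ 2)⁻¹ *
            ((D n + δ) * (D n ^ 2 * (ω ^ 2)⁻¹ * B n ^ 2 + B (n + 1) ^ 2) - D n * B n) := by
        have hi : ω⁻¹ ^ 2 = (ω ^ 2)⁻¹ := by rw [inv_pow]
        generalize hα : D n * (ω ^ 2)⁻¹ * B n = α
        generalize hβ : B (n + 1) * ω⁻¹ = β
        have e1 : Complex.normSq v * (ω ^ 2)⁻¹ *
            ((D n + δ) * (D n ^ 2 * (ω ^ 2)⁻¹ * B n ^ 2 + B (n + 1) ^ 2) - D n * B n)
            = Complex.normSq v * ((D n + δ) * (α ^ 2 + β ^ 2) - α) := by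
          rw [← hα, ← hβ]
          have : (B (n + 1) * ω⁻¹) ^ 2 = B (n + 1) ^ 2 * (ω ^ 2)⁻¹ := by rw [mul_pow, hi]
          rw [this]; ring
        rw [e1, Complex.normSq_apply]
        simp
        ring
      rw [h1]
      have := Complex.normSq_pos.2 hv
      have h2 := sub_pos.2 hineq
      positivity

/-! ### Existence of the Lyapunov matrix -/

/-- The matrix `H` of the Lyapunov function.  Its existence comes from `kyp`; its positivity is
tested on eigenvectors `v`: with `X` the tail sums of `v` one has `X_n = 0` and `S X = v`, so the
form of `kyp` is `-λ ⟨v, T X⟩` there, while `-⟨v, T X⟩ > 0` by `FormPos`. -/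
lemma exists_lyapunov (n : ℕ) (D : ℕ → ℝ) (hD0 : D 0 = 0) (hF : FormPos n D)
    (hDpos : ∀ i, 1 ≤ i → i ≤ n → 0 < D i) (hDg : ∀ i, i + 2 ≤ n → 9 / 4 * D i ≤ D (i + 2))
    (δ : ℝ) (hδ : 0 < δ)
    (hn2 : 2 ≤ n → D (n - 1) < D n ∧ D n ^ 2 < 4 * (D n - D (n - 1)) * δ) :
    ∃ H : Matrix (Fin n) (Fin n) ℝ, H.PosDef ∧ ∀ x : Fin (n + 1) → ℝ, x ≠ 0 →
      0 < x ⬝ᵥ (costMat n D (D n + δ) *ᵥ x) - (diffMat n *ᵥ x) ⬝ᵥ (H *ᵥ (driftMat n D *ᵥ x)) := by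
  obtain ⟨H, hH, hpos⟩ := kyp (costMat n D (D n + δ)) (diffMat n) (driftMat n D)
    (freq_cond n D hD0 hDpos hDg δ hδ hn2)
  refine ⟨H, ?_, hpos⟩
  have hH' : H.IsHermitian := by rwa [Matrix.IsHermitian, Matrix.conjTranspose_eq_transpose_of_trivial]
  rw [hH'.posDef_iff_eigenvalues_pos]
  intro i
  set v : Fin n → ℝ := ⇑(hH'.eigenvectorBasis i) with hv
  have hv0 : v ≠ 0 := by
    intro h
    apply hH'.eigenvectorBasis.orthonormal.ne_zero i
    ext j
    exact congrFun h j
  have heig : H *ᵥ v = hH'.eigenvalues i • v := hH'.mulVec_eigenvectorBasis i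
  set X : ℕ → ℝ := fun p => ∑ q : Fin n, if p ≤ q then v q else 0 with hXdef
  have hXn : ∀ p, n ≤ p → X p = 0 := fun p hp =>
    Finset.sum_eq_zero fun q _ => if_neg (by omega)
  have hdiff : ∀ p : Fin n, X p - X (p + 1) = v p := by
    intro p
    rw [hXdef]
    simp only
    rw [← Finset.sum_sub_distrib, Finset.sum_eq_single p]
    · simp
    · intro q _ hq
      have : (q : ℕ) ≠ p := fun h => hq (Fin.ext h)
      by_cases h : (p : ℕ) ≤ q
      · rw [if_pos h, if_pos (by omega), sub_self]
      · rw [if_neg h, if_neg (by omega), sub_self]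
    · simp
  have hXne : ∃ p, X p ≠ 0 := by
    by_contra hcon
    push Not at hcon
    apply hv0
    funext p
    rw [← hdiff p, hcon, hcon, sub_self]; rfl
  have hfp := hF X hXn hXne
  set x : Fin (n + 1) → ℝ := fun p => X p with hx
  have hext : extZero x = X := by
    funext p
    unfold extZero
    split_ifs with h
    · rfl
    · exact (hXn p (by omega)).symm
  have hx0 : x ≠ 0 := by
    intro h
    obtain ⟨p, hp⟩ := hXne
    apply hp
    rw [← hext, h]
    simp [extZero]
  have hS : diffMat n *ᵥ x = v := by
    funext p
    have := diffMat_mulVec x p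
    rw [hext, hdiff] at this
    simpa using this
  have hT : ∀ p : Fin n, (driftMat n D *ᵥ x) p = D p * X (p - 1) - D (p + 1) * X p := by
    intro p
    have := driftMat_mulVec D x p
    rw [hext] at this
    simpa using this
  have hQ : x ⬝ᵥ (costMat n D (D n + δ) *ᵥ x) = 0 := by
    have := costMat_form D (D n + δ) x x
    rw [hext, hXn n le_rfl, zero_mul] at this
    simpa using this
  have h1 := hpos x hx0
  have h2 : v ⬝ᵥ (H *ᵥ (driftMat n D *ᵥ x))
      = hH'.eigenvalues i * (v ⬝ᵥ (driftMat n D *ᵥ x)) := by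
    rw [Matrix.dotProduct_mulVec, ← Matrix.mulVec_transpose, hH.eq, heig, smul_dotProduct,
      smul_eq_mul]
  have h3 : v ⬝ᵥ (driftMat n D *ᵥ x) < 0 := by
    have : v ⬝ᵥ (driftMat n D *ᵥ x) = - ∑ p ∈ Finset.range n,
        (X p - X (p + 1)) * (D (p + 1) * X p - D p * X (p - 1)) := by
      rw [← Finset.sum_neg_distrib, Finset.sum_range, dotProduct]
      refine Finset.sum_congr rfl fun p _ => ?_
      rw [hT, hdiff]; ring
    linarith
  rw [hQ, hS, h2] at h1
  nlinarith

/-! ### Input-to-state stability from a quadratic Lyapunov function -/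

lemma exists_form_lower {κ : Type*} [Fintype κ] [DecidableEq κ] (K : Matrix κ κ ℝ)
    (h : ∀ x : κ → ℝ, x ≠ 0 → 0 < x ⬝ᵥ (K *ᵥ x)) :
    ∃ ε > 0, ∀ x : κ → ℝ, ε * (x ⬝ᵥ x) ≤ x ⬝ᵥ (K *ᵥ x) := by
  have hc : Continuous fun ε : ℝ => K - ε • (1 : Matrix κ κ ℝ) := by fun_prop
  have hmem : (fun ε : ℝ => K - ε • (1 : Matrix κ κ ℝ)) 0 ∈
      {K : Matrix κ κ ℝ | ∀ x : κ → ℝ, x ≠ 0 → 0 < x ⬝ᵥ (K *ᵥ x)} := by simpa using h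
  have hev : ∀ᶠ ε in nhdsWithin (0 : ℝ) (Set.Ioi 0), K - ε • (1 : Matrix κ κ ℝ) ∈
      {K : Matrix κ κ ℝ | ∀ x : κ → ℝ, x ≠ 0 → 0 < x ⬝ᵥ (K *ᵥ x)} :=
    (hc.continuousAt.eventually (isOpen_posForm.mem_nhds hmem)).filter_mono nhdsWithin_le_nhds
  obtain ⟨ε, hε, hε0⟩ := (hev.and self_mem_nhdsWithin).exists
  refine ⟨ε, hε0, fun x => ?_⟩
  by_cases hx : x = 0
  · simp [hx]
  · have := hε x hx
    rw [Matrix.sub_mulVec, Matrix.smul_mulVec, Matrix.one_mulVec, dotProduct_sub,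
      dotProduct_smul, smul_eq_mul] at this
    linarith

lemma exists_form_upper {κ : Type*} [Fintype κ] (K : Matrix κ κ ℝ) :
    ∃ L > 0, ∀ x : κ → ℝ, x ⬝ᵥ (K *ᵥ x) ≤ L * (x ⬝ᵥ x) := by
  have hsq : ∀ (x : κ → ℝ) i, x i ^ 2 ≤ x ⬝ᵥ x := fun x i => by
    rw [pow_two]
    exact Finset.single_le_sum (f := fun i => x i * x i) (fun j _ => mul_self_nonneg _)
      (Finset.mem_univ i)
  refine ⟨∑ i, ∑ j, |K i j| + 1, by positivity, fun x => ?_⟩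
  have h0 : 0 ≤ x ⬝ᵥ x := Finset.sum_nonneg fun j _ => mul_self_nonneg _
  have h1 : x ⬝ᵥ (K *ᵥ x) ≤ (∑ i, ∑ j, |K i j|) * (x ⬝ᵥ x) := by
    simp only [dotProduct, Matrix.mulVec, Finset.mul_sum]
    rw [← Finset.mul_sum, Finset.sum_mul]
    refine Finset.sum_le_sum fun i _ => ?_
    rw [Finset.sum_mul]
    refine Finset.sum_le_sum fun j _ => ?_
    have h2 : |x i * x j| ≤ x ⬝ᵥ x := by
      rw [abs_le]
      constructor <;> nlinarith [hsq x i, hsq x j, sq_nonneg (x i + x j), sq_nonneg (x i - x j)]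
    calc x i * (K i j * x j) = K i j * (x i * x j) := by ring
      _ ≤ |K i j * (x i * x j)| := le_abs_self _
      _ = |K i j| * |x i * x j| := abs_mul _ _
      _ ≤ _ := mul_le_mul_of_nonneg_left h2 (abs_nonneg _)
  linarith

/-- Comparison principle for `V' ≤ -r V + C`. -/
lemma comparison {V V' : ℝ → ℝ} {r C t₀ t : ℝ} (hr : 0 < r) (ht : t₀ ≤ t)
    (hV : ∀ s ∈ Set.Icc t₀ t, HasDerivAt V (V' s) s)
    (hle : ∀ s ∈ Set.Icc t₀ t, V' s ≤ -r * V s + C) (hC : 0 ≤ C) :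
    V t ≤ V t₀ * Real.exp (-r * (t - t₀)) + C / r := by
  have hd : ∀ s ∈ Set.Icc t₀ t, HasDerivAt (fun s => (V s - C / r) * Real.exp (r * (s - t₀)))
      ((V' s) * Real.exp (r * (s - t₀)) + (V s - C / r) * (Real.exp (r * (s - t₀)) * r)) s := by
    intro s hs
    have h1 : HasDerivAt (fun s => r * (s - t₀)) r s := by
      simpa using ((hasDerivAt_id s).sub_const t₀).const_mul r
    exact ((hV s hs).sub_const _).mul h1.exp
  have hanti : AntitoneOn (fun s => (V s - C / r) * Real.exp (r * (s - t₀))) (Set.Icc t₀ t) := by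
    refine antitoneOn_of_hasDerivWithinAt_nonpos (convex_Icc _ _)
      (fun s hs => (hd s hs).continuousAt.continuousWithinAt)
      (fun s hs => (hd s (interior_subset hs)).hasDerivWithinAt) fun s hs => ?_
    have h2 := hle s (interior_subset hs)
    have h3 : V' s + (V s - C / r) * r ≤ 0 := by
      rw [sub_mul, div_mul_cancel₀ _ hr.ne']; linarith
    have h4 := mul_nonpos_of_nonpos_of_nonneg h3 (Real.exp_pos (r * (s - t₀))).le
    linarith
  have h5 := hanti (Set.left_mem_Icc.2 ht) (Set.right_mem_Icc.2 ht) ht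
  simp only [sub_self, mul_zero, Real.exp_zero, mul_one] at h5
  have h6 : Real.exp (r * (t - t₀)) * Real.exp (-r * (t - t₀)) = 1 := by
    rw [← Real.exp_add]; simp
  have h7 := mul_le_mul_of_nonneg_right h5 (Real.exp_pos (-r * (t - t₀))).le
  rw [mul_assoc, h6, mul_one] at h7
  have h8 : 0 ≤ C / r * Real.exp (-r * (t - t₀)) := by positivity
  linarith

/-- Input-to-state estimate for finitely many copies of a Lur'e system
`x' = A x - w g + u b` whose feedback `w` satisfies the sector condition
`d ∑ ⟨e, x⟩² ≤ ∑ ⟨e, x⟩ w`, given a quadratic Lyapunov function `⟨x, P x⟩` with `P g = e`. -/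
lemma lure_iss {ι κ : Type*} [Fintype ι] [Fintype κ] [DecidableEq κ] (P A : Matrix κ κ ℝ)
    (hP : P.IsSymm) (hPpos : ∀ x : κ → ℝ, x ≠ 0 → 0 < x ⬝ᵥ (P *ᵥ x)) (g b e : κ → ℝ) (d : ℝ)
    (hPg : P *ᵥ g = e)
    (hform : ∀ x : κ → ℝ, x ≠ 0 → x ⬝ᵥ (P *ᵥ (A *ᵥ x)) < d * (x ⬝ᵥ e) ^ 2) :
    ∃ c > 0, ∃ r > 0, ∃ ρ > 0, ∀ (t₀ t U : ℝ) (x : ℝ → ι → κ → ℝ) (w u : ℝ → ι → ℝ),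
      t₀ ≤ t → (∀ s ∈ Set.Icc t₀ t, ∑ a, u s a ^ 2 ≤ U ^ 2) →
      (∀ s ∈ Set.Icc t₀ t, d * ∑ a, (x s a ⬝ᵥ e) ^ 2 ≤ ∑ a, w s a * (x s a ⬝ᵥ e)) →
      (∀ s ∈ Set.Icc t₀ t, ∀ a, HasDerivAt (fun s => x s a)
        (A *ᵥ x s a - w s a • g + u s a • b) s) →
      ∑ a, x t a ⬝ᵥ x t a ≤
        c * (∑ a, x t₀ a ⬝ᵥ x t₀ a) * Real.exp (-r * (t - t₀)) + ρ * U ^ 2 := by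
  obtain ⟨m, hm, hmP⟩ := exists_form_lower P hPpos
  obtain ⟨L, hL, hLP⟩ := exists_form_upper P
  have hvec : ∀ x : κ → ℝ, x ⬝ᵥ (vecMulVec e e *ᵥ x) = (x ⬝ᵥ e) ^ 2 := by
    intro x
    rw [vecMulVec_mulVec, dotProduct_comm e x]
    simp [dotProduct_smul, pow_two]
  obtain ⟨ε, hε, hεF⟩ := exists_form_lower (d • vecMulVec e e - P * A) (by
    intro x hx
    rw [Matrix.sub_mulVec, Matrix.smul_mulVec, dotProduct_sub, dotProduct_smul, hvec,
      ← Matrix.mulVec_mulVec, smul_eq_mul]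
    exact sub_pos.2 (hform x hx))
  have hεF' : ∀ x : κ → ℝ, x ⬝ᵥ (P *ᵥ (A *ᵥ x)) ≤ d * (x ⬝ᵥ e) ^ 2 - ε * (x ⬝ᵥ x) := by
    intro x
    have := hεF x
    rw [Matrix.sub_mulVec, Matrix.smul_mulVec, dotProduct_sub, dotProduct_smul, hvec,
      ← Matrix.mulVec_mulVec, smul_eq_mul] at this
    linarith
  set f := P *ᵥ b with hf
  -- Young's inequality for the input term
  have hyoung : ∀ (x : κ → ℝ) (v : ℝ), 2 * (v * (x ⬝ᵥ f)) ≤ ε * (x ⬝ᵥ x) + (f ⬝ᵥ f) / ε * v ^ 2 := by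
    intro x v
    have h0 : 0 ≤ (ε • x - v • f) ⬝ᵥ (ε • x - v • f) :=
      Finset.sum_nonneg fun j _ => mul_self_nonneg _
    simp only [sub_dotProduct, dotProduct_sub, smul_dotProduct, dotProduct_smul, smul_eq_mul,
      dotProduct_comm f x] at h0
    have h1 : 0 ≤ ε * (ε * (x ⬝ᵥ x) + (f ⬝ᵥ f) / ε * v ^ 2 - 2 * (v * (x ⬝ᵥ f))) := by
      have : ε * ((f ⬝ᵥ f) / ε * v ^ 2) = (f ⬝ᵥ f) * v ^ 2 := by field_simp
      linarith
    have h2 := nonneg_of_mul_nonneg_right h1 hε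
    linarith
  have hff : 0 ≤ f ⬝ᵥ f := Finset.sum_nonneg fun j _ => mul_self_nonneg _
  set C := (f ⬝ᵥ f) / ε with hC
  have hC0 : 0 ≤ C := by positivity
  have hr : 0 < ε / L := by positivity
  refine ⟨L / m, by positivity, ε / L, hr, (C / (ε / L) + 1) / m, by positivity, ?_⟩
  intro t₀ t U x w u ht hu hw hx
  have hder : ∀ s ∈ Set.Icc t₀ t, HasDerivAt (fun s => ∑ a, x s a ⬝ᵥ (P *ᵥ x s a))
      (∑ a, 2 * (x s a ⬝ᵥ (P *ᵥ (A *ᵥ x s a - w s a • g + u s a • b)))) s := by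
    intro s hs
    refine HasDerivAt.fun_sum fun a _ => ?_
    have h1 := hx s hs a
    set y := A *ᵥ x s a - w s a • g + u s a • b
    have h2 : ∀ i, HasDerivAt (fun s => x s a i) (y i) s := hasDerivAt_pi.1 h1
    have h3 : ∀ i, HasDerivAt (fun s => (P *ᵥ x s a) i) ((P *ᵥ y) i) s := fun i =>
      HasDerivAt.fun_sum fun j _ => (h2 j).const_mul (P i j)
    have h4 : HasDerivAt (fun s => x s a ⬝ᵥ (P *ᵥ x s a))
        (∑ i, (y i * (P *ᵥ x s a) i + x s a i * (P *ᵥ y) i)) s :=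
      HasDerivAt.fun_sum fun i _ => (h2 i).mul (h3 i)
    refine h4.congr_deriv ?_
    rw [Finset.sum_add_distrib]
    change y ⬝ᵥ (P *ᵥ x s a) + x s a ⬝ᵥ (P *ᵥ y) = _
    rw [Matrix.dotProduct_mulVec y, ← Matrix.mulVec_transpose, hP.eq, dotProduct_comm]
    ring
  have hcmp := comparison (V := fun s => ∑ a, x s a ⬝ᵥ (P *ᵥ x s a)) (C := C * U ^ 2) hr ht hder
    (by
      intro s hs
      have e1 : ∀ a, 2 * (x s a ⬝ᵥ (P *ᵥ (A *ᵥ x s a - w s a • g + u s a • b)))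
          ≤ 2 * (d * (x s a ⬝ᵥ e) ^ 2 - w s a * (x s a ⬝ᵥ e)) - ε / L * (x s a ⬝ᵥ (P *ᵥ x s a))
            + C * u s a ^ 2 := by
        intro a
        rw [Matrix.mulVec_add, Matrix.mulVec_sub, Matrix.mulVec_smul, Matrix.mulVec_smul, hPg,
          dotProduct_add, dotProduct_sub, dotProduct_smul, dotProduct_smul, smul_eq_mul,
          smul_eq_mul]
        have h1 := hεF' (x s a)
        have h2 := hyoung (x s a) (u s a)
        have h3 : ε / L * (x s a ⬝ᵥ (P *ᵥ x s a)) ≤ ε * (x s a ⬝ᵥ x s a) := by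
          have := mul_le_mul_of_nonneg_left (hLP (x s a)) hr.le
          rwa [← mul_assoc, div_mul_cancel₀ _ hL.ne'] at this
        linarith
      refine (Finset.sum_le_sum fun a _ => e1 a).trans ?_
      rw [Finset.sum_add_distrib, Finset.sum_sub_distrib, ← Finset.mul_sum, ← Finset.mul_sum,
        ← Finset.mul_sum, Finset.sum_sub_distrib, ← Finset.mul_sum]
      have h1 := hw s hs
      have h2 := mul_le_mul_of_nonneg_left (hu s hs) hC0
      linarith)
    (by positivity)
  have hlow : m * ∑ a, x t a ⬝ᵥ x t a ≤ ∑ a, x t a ⬝ᵥ (P *ᵥ x t a) := by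
    rw [Finset.mul_sum]
    exact Finset.sum_le_sum fun a _ => hmP _
  have hup : ∑ a, x t₀ a ⬝ᵥ (P *ᵥ x t₀ a) ≤ L * ∑ a, x t₀ a ⬝ᵥ x t₀ a := by
    rw [Finset.mul_sum]
    exact Finset.sum_le_sum fun a _ => hLP _
  have hup' := mul_le_mul_of_nonneg_right hup (Real.exp_pos (-(ε / L) * (t - t₀))).le
  have hfin : m * ∑ a, x t a ⬝ᵥ x t a ≤ m * (L / m * (∑ a, x t₀ a ⬝ᵥ x t₀ a) *
      Real.exp (-(ε / L) * (t - t₀)) + (C / (ε / L) + 1) / m * U ^ 2) := by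
    have e2 : m * (L / m * (∑ a, x t₀ a ⬝ᵥ x t₀ a) *
      Real.exp (-(ε / L) * (t - t₀)) + (C / (ε / L) + 1) / m * U ^ 2)
      = L * (∑ a, x t₀ a ⬝ᵥ x t₀ a) * Real.exp (-(ε / L) * (t - t₀))
        + (C * U ^ 2 / (ε / L) + U ^ 2) := by
      have hm' := hm.ne'
      field_simp
    rw [e2]
    have := sq_nonneg U
    linarith
  exact le_of_mul_le_mul_left hfin hm

/-! ### Consequences of the matrix inequality `Q̄ ≻ 0` -/

lemma sum_telescope_tail (X : ℕ → ℝ) (p N : ℕ) (hp : p ≤ N) :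
    ∑ q ∈ Finset.range N, (if p ≤ q then X q - X (q + 1) else 0) = X p - X N := by
  induction N with
  | zero => obtain rfl : p = 0 := by omega
            simp
  | succ N ih =>
    rw [Finset.sum_range_succ]
    rcases hp.eq_or_lt with rfl | h
    · rw [if_neg (by omega), Finset.sum_eq_zero fun q hq => if_neg (by
        have := Finset.mem_range.1 hq; omega)]
      simp
    · rw [ih (by omega), if_pos (by omega)]; ring

section LMI

variable {n : ℕ} {D : ℕ → ℝ} {δ : ℝ} {Sb : Matrix (Fin (n + 1)) (Fin (n + 1)) ℝ}

lemma form_pos_of_posDef (h : (Sb + Sbᵀ).PosDef) (z : Fin (n + 1) → ℝ) (hz : z ≠ 0) :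
    0 < z ⬝ᵥ (Sb *ᵥ z) := by
  have := h.dotProduct_mulVec_pos hz
  rw [star_trivial, Matrix.add_mulVec, dotProduct_add, Matrix.mulVec_transpose,
    dotProduct_comm z (z ᵥ* Sb), ← Matrix.dotProduct_mulVec] at this
  linarith

/-- The entries of `Σ̄ z` at `z_p = X_p - X_{p+1}` telescope to `D_{p+1} X_p - D_p X_{p-1}`. -/
lemma formPos_of_posDef (hn : 1 ≤ n) (hD0 : D 0 = 0)
    (hSb : ∀ p q : Fin (n + 1), Sb p q =
      if (p : ℕ) = 0 then D 1
      else if 1 ≤ (p : ℕ) ∧ (p : ℕ) ≤ (q : ℕ) ∧ (q : ℕ) < n then D (p + 1) - D p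
      else if (p : ℕ) = (q : ℕ) + 1 then -D (q + 1)
      else if (p : ℕ) = n ∧ (q : ℕ) = n then δ
      else 0)
    (h : (Sb + Sbᵀ).PosDef) : FormPos n D := by
  intro X hXn hXne
  set z : Fin (n + 1) → ℝ := fun p => X p - X (p + 1) with hz
  have hz0 : z ≠ 0 := by
    intro h0
    obtain ⟨p, hp⟩ := hXne
    -- if all differences vanish then so do all `X_p`, by descending induction from `X_{n+1} = 0`
    have : ∀ j, j ≤ n + 1 → X (n + 1 - j) = 0 := by
      intro j
      induction j with
      | zero => intro _; exact hXn _ (by omega)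
      | succ j ih =>
        intro hj
        have h1 := congrFun h0 ⟨n + 1 - (j + 1), by omega⟩
        have h2 := ih (by omega)
        simp only [hz, Pi.zero_apply] at h1
        rw [show n + 1 - (j + 1) + 1 = n + 1 - j by omega, h2] at h1
        linarith
    by_cases hpn : n ≤ p
    · exact hp (hXn p hpn)
    · apply hp
      have := this (n + 1 - p) (by omega)
      rwa [show n + 1 - (n + 1 - p) = p by omega] at this
  have hpos := form_pos_of_posDef h z hz0
  have hrow : ∀ p : Fin (n + 1), (p : ℕ) < n →
      (Sb *ᵥ z) p = D (p + 1) * X p - D p * X (p - 1) := by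
    intro p hp
    rcases Nat.eq_zero_or_pos (p : ℕ) with hp0 | hp0
    · have h1 : ∀ q, Sb p q * z q = D 1 * (if 0 ≤ (q : ℕ) then X q - X (q + 1) else 0) := by
        intro q
        rw [hSb, if_pos hp0, if_pos (Nat.zero_le _)]
      rw [Matrix.mulVec, dotProduct, Finset.sum_congr rfl fun q _ => h1 q, ← Finset.mul_sum,
        ← Finset.sum_range fun q => if 0 ≤ q then X q - X (q + 1) else 0,
        sum_telescope_tail _ _ _ (Nat.zero_le _), hXn (n + 1) (by omega), hp0, hD0]
      ring
    · have h1 : ∀ q : Fin (n + 1), Sb p q * z q =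
          (D (p + 1) - D p) * (if (p : ℕ) ≤ (q : ℕ) then X q - X (q + 1) else 0)
          + (if (q : ℕ) = p - 1 then -D p * (X (p - 1) - X p) else 0) := by
        intro q
        rw [hSb, if_neg hp0.ne']
        by_cases h2 : (p : ℕ) ≤ q
        · rw [if_pos h2, if_neg (show ¬ (q : ℕ) = p - 1 by omega)]
          by_cases h3 : (q : ℕ) < n
          · rw [if_pos ⟨hp0, h2, h3⟩, add_zero]
          · have : z q = 0 := by
              simp only [hz]
              rw [hXn _ (by omega), hXn _ (by omega), sub_self]
            rw [this, hXn q (by omega), hXn (q + 1) (by omega)]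
            ring
        · rw [if_neg h2, if_neg (by tauto)]
          by_cases h3 : (p : ℕ) = q + 1
          · rw [if_pos h3, if_pos (by omega)]
            simp only [hz]
            rw [show (p : ℕ) - 1 = q by omega, h3]; ring
          · rw [if_neg h3, if_neg (by omega), if_neg (by omega)]; ring
      rw [Matrix.mulVec, dotProduct, Finset.sum_congr rfl fun q _ => h1 q, Finset.sum_add_distrib,
        ← Finset.mul_sum, ← Finset.sum_range fun q => if (p : ℕ) ≤ q then X q - X (q + 1) else 0,
        ← Finset.sum_range fun q => if q = (p : ℕ) - 1 then -D p * (X (p - 1) - X p) else 0,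
        sum_telescope_tail _ _ _ (by omega), hXn (n + 1) (by omega), Finset.sum_ite_eq',
        if_pos (Finset.mem_range.2 (by omega))]
      ring
  rw [dotProduct, Fin.sum_univ_castSucc] at hpos
  have hlast : z (Fin.last n) = 0 := by
    simp only [hz, Fin.val_last]
    rw [hXn _ le_rfl, hXn _ (by omega), sub_self]
  rw [hlast, zero_mul, add_zero] at hpos
  rw [Finset.sum_range]
  refine hpos.trans_eq (Finset.sum_congr rfl fun p _ => ?_)
  rw [hrow _ (by simp)]
  rfl

/-- The trailing `2 × 2` principal minor of `Σ̄ + Σ̄ᵀ` is positive. -/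
lemma minor_of_posDef (hn : 2 ≤ n) (hlt : D (n - 1) < D n)
    (hSb : ∀ p q : Fin (n + 1), Sb p q =
      if (p : ℕ) = 0 then D 1
      else if 1 ≤ (p : ℕ) ∧ (p : ℕ) ≤ (q : ℕ) ∧ (q : ℕ) < n then D (p + 1) - D p
      else if (p : ℕ) = (q : ℕ) + 1 then -D (q + 1)
      else if (p : ℕ) = n ∧ (q : ℕ) = n then δ
      else 0)
    (h : (Sb + Sbᵀ).PosDef) : D n ^ 2 < 4 * (D n - D (n - 1)) * δ := by
  obtain ⟨m, rfl⟩ : ∃ m, n = m + 2 := ⟨n - 2, by omega⟩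
  simp only [show m + 2 - 1 = m + 1 by omega] at *
  set i : Fin (m + 2 + 1) := ⟨m + 1, by omega⟩ with hi
  set j : Fin (m + 2 + 1) := ⟨m + 2, by omega⟩ with hj
  have h1 : Sb i i = D (m + 2) - D (m + 1) := by rw [hSb]; simp [hi]
  have h2 : Sb i j = 0 := by rw [hSb]; simp [hi, hj]
  have h3 : Sb j i = -D (m + 2) := by rw [hSb]; simp [hi, hj]
  have h4 : Sb j j = δ := by rw [hSb]; simp [hj]
  have hij : i ≠ j := by simp [hi, hj]
  have hform : ∀ α β : ℝ, β ≠ 0 →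
      0 < α ^ 2 * (D (m + 2) - D (m + 1)) - α * β * D (m + 2) + β ^ 2 * δ := by
    intro α β hβ
    have := form_pos_of_posDef h (α • Pi.single i 1 + β • Pi.single j 1) (by
      intro h0
      have := congrFun h0 j
      simp [hij.symm] at this
      exact hβ this)
    simp only [Matrix.mulVec_add, Matrix.mulVec_smul, Matrix.mulVec_single_one, dotProduct_add,
      add_dotProduct, smul_dotProduct, dotProduct_smul, single_dotProduct, Matrix.col_apply,
      h1, h2, h3, h4, smul_eq_mul] at this
    linarith
  have hΔ : 0 < D (m + 2) - D (m + 1) := by linarith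
  have := hform (D (m + 2)) (2 * (D (m + 2) - D (m + 1))) (by positivity)
  have h5 : 0 < (D (m + 2) - D (m + 1)) *
      (4 * (D (m + 2) - D (m + 1)) * δ - D (m + 2) ^ 2) := by linarith
  have := pos_of_mul_pos_right h5 hΔ.le
  linarith

end LMI

/-! ### The Lyapunov function -/

/-- Matrix of `X ↦ (D_p X_{p-1})_{p ≤ n}`. -/
def shiftMat (n : ℕ) (D : ℕ → ℝ) : Matrix (Fin (n + 1)) (Fin (n + 1)) ℝ :=
  Matrix.of fun p j => if (j : ℕ) = (p : ℕ) - 1 then D p else 0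

lemma shiftMat_mulVec {n : ℕ} (D : ℕ → ℝ) (x : Fin (n + 1) → ℝ) (p : Fin (n + 1)) :
    (shiftMat n D *ᵥ x) p = D p * extZero x (p - 1) := by
  simp only [Matrix.mulVec, dotProduct, shiftMat, Matrix.of_apply]
  rw [sum_ite_val_extZero _ _ _ (by omega)]

lemma diffMat_mulVec_real {n : ℕ} (x : Fin (n + 1) → ℝ) (p : Fin n) :
    (diffMat n *ᵥ x) p = extZero x p - extZero x (p + 1) := by
  simpa using diffMat_mulVec x p

lemma diffMat_shiftMat {n : ℕ} (D : ℕ → ℝ) (x : Fin (n + 1) → ℝ) :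
    diffMat n *ᵥ (shiftMat n D *ᵥ x) = driftMat n D *ᵥ x := by
  funext p
  have h : ∀ q : ℕ, q ≤ n → extZero (shiftMat n D *ᵥ x) q = D q * extZero x (q - 1) := by
    intro q hq
    rw [← shiftMat_mulVec D x ⟨q, by omega⟩, ← extZero_val (shiftMat n D *ᵥ x)]
  have h2 := driftMat_mulVec D x p
  simp only [Algebra.algebraMap_self, RingHom.coe_id, Matrix.map_id, id] at h2
  rw [diffMat_mulVec_real, h2, h _ (by omega), h _ (by omega)]
  simp

/-- The matrix `P = SᵀHS + eₙeₙᵀ` of the Lyapunov function satisfies the hypotheses of `lure_iss`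
with `g = (1, …, 1)` and `e = eₙ`. -/
lemma lyapunov_assembled (n : ℕ) (D : ℕ → ℝ) (d : ℝ) (H : Matrix (Fin n) (Fin n) ℝ)
    (hH : H.PosDef) (hform : ∀ x : Fin (n + 1) → ℝ, x ≠ 0 →
      0 < x ⬝ᵥ (costMat n D d *ᵥ x) - (diffMat n *ᵥ x) ⬝ᵥ (H *ᵥ (driftMat n D *ᵥ x))) :
    ∃ P : Matrix (Fin (n + 1)) (Fin (n + 1)) ℝ, P.IsSymm ∧
      (∀ x : Fin (n + 1) → ℝ, x ≠ 0 → 0 < x ⬝ᵥ (P *ᵥ x)) ∧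
      P *ᵥ 1 = Pi.single (Fin.last n) 1 ∧
      ∀ x : Fin (n + 1) → ℝ, x ≠ 0 → x ⬝ᵥ (P *ᵥ (shiftMat n D *ᵥ x))
        < d * (x ⬝ᵥ Pi.single (Fin.last n) 1) ^ 2 := by
  set S := diffMat n with hS
  set e : Fin (n + 1) → ℝ := Pi.single (Fin.last n) 1 with he
  have hHs : Hᵀ = H := by
    have := hH.isHermitian
    rwa [Matrix.IsHermitian, Matrix.conjTranspose_eq_transpose_of_trivial] at this
  have hPv : ∀ y, (Sᵀ * H * S + vecMulVec e e) *ᵥ y = Sᵀ *ᵥ (H *ᵥ (S *ᵥ y)) + y (Fin.last n) • e := by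
    intro y
    rw [Matrix.add_mulVec, ← Matrix.mulVec_mulVec, ← Matrix.mulVec_mulVec, vecMulVec_mulVec]
    congr 1
    simp [he]
  have hPf : ∀ x y, x ⬝ᵥ ((Sᵀ * H * S + vecMulVec e e) *ᵥ y)
      = (S *ᵥ x) ⬝ᵥ (H *ᵥ (S *ᵥ y)) + x (Fin.last n) * y (Fin.last n) := by
    intro x y
    rw [hPv, dotProduct_add, Matrix.dotProduct_mulVec x, Matrix.vecMul_transpose, dotProduct_smul]
    simp [he, mul_comm]
  refine ⟨Sᵀ * H * S + vecMulVec e e, ?_, ?_, ?_, ?_⟩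
  · rw [Matrix.IsSymm, Matrix.transpose_add, Matrix.transpose_mul, Matrix.transpose_mul,
      Matrix.transpose_transpose, hHs, Matrix.transpose_vecMulVec, Matrix.mul_assoc]
  · intro x hx
    rw [hPf]
    by_cases hSx : S *ᵥ x = 0
    · -- a vector with vanishing differences is constant, so its last entry is nonzero
      have hstep : ∀ p < n, extZero x p = extZero x (p + 1) := by
        intro p hp
        have := diffMat_mulVec_real x ⟨p, hp⟩
        rw [← hS, hSx] at this
        exact sub_eq_zero.1 this.symm
      have hconst : ∀ p ≤ n, extZero x p = extZero x 0 := by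
        intro p
        induction p with
        | zero => simp
        | succ p ih => intro hp; rw [← hstep p (by omega), ih (by omega)]
      obtain ⟨p, hp, hne⟩ := exists_extZero_ne hx
      have hl : x (Fin.last n) ≠ 0 := by
        rw [← extZero_val x, Fin.val_last, hconst n le_rfl, ← hconst p hp]
        exact hne
      rw [hSx, zero_dotProduct, zero_add]
      exact mul_self_pos.2 hl
    · have h1 := hH.dotProduct_mulVec_pos hSx
      rw [star_trivial] at h1
      linarith [mul_self_nonneg (x (Fin.last n))]
  · rw [hPv]
    have h1 : S *ᵥ (1 : Fin (n + 1) → ℝ) = 0 := by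
      funext p
      rw [diffMat_mulVec_real]
      simp [extZero, show (p : ℕ) < n + 1 by omega]
    rw [h1]
    simp
  · intro x hx
    rw [hPf, diffMat_shiftMat, shiftMat_mulVec]
    have h1 := hform x hx
    have h2 := costMat_form D d x x
    simp only [Algebra.algebraMap_self, RingHom.coe_id, Matrix.map_id, id] at h2
    rw [h2] at h1
    have h3 : x (Fin.last n) = extZero x n := by rw [← extZero_val x, Fin.val_last]
    have h4 : x ⬝ᵥ e = extZero x n := by rw [← h3]; simp [he]
    rw [h4, h3, Fin.val_last]
    linarith

/-! ### The system in scaled coordinates -/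

lemma euclNorm_sq {ι : Type*} [Fintype ι] (v : ι → ℝ) : euclNorm v ^ 2 = ∑ i, v i ^ 2 :=
  Real.sq_sqrt (Finset.sum_nonneg fun _ _ => sq_nonneg _)

lemma euclNorm_nonneg {ι : Type*} [Fintype ι] (v : ι → ℝ) : 0 ≤ euclNorm v := Real.sqrt_nonneg _

/-- One component of `Ξ v`: the block `m` of `Ξ v` is `-k_{m+1} F v_0 + v_{m+1}` (blocks from zero). -/
lemma observer_row (n W : ℕ) (k : ℕ → ℝ) (F : Matrix (Fin W) (Fin W) ℝ)
    (v : Fin (n + 1) × Fin W → ℝ) (m : Fin (n + 1)) (a : Fin W) :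
    ((Matrix.of fun p q : Fin (n + 1) × Fin W =>
          if (q.1 : ℕ) = 0 then -(k ((p.1 : ℕ) + 1)) * F p.2 q.2
          else if (q.1 : ℕ) = (p.1 : ℕ) + 1 ∧ p.2 = q.2 then 1
          else 0) *ᵥ v) (m, a)
      = -(k (m + 1)) * ∑ b, F a b * v (0, b)
        + if h : (m : ℕ) + 1 < n + 1 then v (⟨m + 1, h⟩, a) else 0 := by
  simp only [Matrix.mulVec, dotProduct, Matrix.of_apply]
  rw [Fintype.sum_prod_type, Fin.sum_univ_succ]
  congr 1
  · simp [Finset.mul_sum, mul_assoc]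
  · have h1 : ∀ j : Fin n, (∑ b, (if ((j.succ : Fin (n + 1)) : ℕ) = 0 then -(k (m + 1)) * F a b
        else if ((j.succ : Fin (n + 1)) : ℕ) = (m : ℕ) + 1 ∧ a = b then 1 else 0) * v (j.succ, b))
        = if (j : ℕ) = m then v (j.succ, a) else 0 := by
      intro j
      by_cases hj : (j : ℕ) = m <;> simp [hj]
    rw [Finset.sum_congr rfl fun j _ => h1 j]
    split_ifs with h
    · rw [Finset.sum_eq_single ⟨m, by omega⟩]
      · simp
      · intro j _ hj
        exact if_neg fun h' => hj (Fin.ext h')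
      · simp
    · exact Finset.sum_eq_zero fun j _ => if_neg (by omega)

/-- The ratios `D_i = k_{M-i+1} / k_{M-i}` for `i ≥ 1`, where `M = n + 1`, with `D_0 = 0`. -/
noncomputable def gainRatio (n : ℕ) (k : ℕ → ℝ) (i : ℕ) : ℝ :=
  if i = 0 then 0 else k (n + 1 - i + 1) / k (n + 1 - i)

/-- The hypotheses on gains, `μ` and `Q̄` in terms of the ratios `D_i`. The margin `δ'` is `δ` if `M ≥ 2`
and `k₁ δ` if `M = 1`. -/
lemma gain_conditions (n : ℕ) (k : ℕ → ℝ) (hk : ∀ m, 1 ≤ m → m ≤ n + 1 → 0 < k m)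
    (δ : ℝ) (hδ : 0 < δ)
    (μ : ℝ) (hμ : μ = if n + 1 = 1 then δ else (δ * k 1 + k 2) / (k 1) ^ 2)
    (Sb : Matrix (Fin (n + 1)) (Fin (n + 1)) ℝ)
    (hSb : ∀ p q : Fin (n + 1), Sb p q =
      if (p : ℕ) = 0 then k (n + 1) / k (n + 1 - 1)
      else if 1 ≤ (p : ℕ) ∧ (p : ℕ) ≤ (q : ℕ) ∧ (q : ℕ) < n + 1 - 1 then
        k (n + 1 - (p : ℕ)) / k (n + 1 - 1 - (p : ℕ))
          - k (n + 1 - (p : ℕ) + 1) / k (n + 1 - (p : ℕ))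
      else if (p : ℕ) = (q : ℕ) + 1 then -(k (n + 1 - (q : ℕ)) / k (n + 1 - 1 - (q : ℕ)))
      else if (p : ℕ) = n + 1 - 1 ∧ (q : ℕ) = n + 1 - 1 then δ
      else 0)
    (hQbar : 2 ≤ n + 1 → (Sb + Sbᵀ).PosDef) :
    ∃ δ' > 0, k 1 * μ = gainRatio n k n + δ' ∧ FormPos n (gainRatio n k) ∧
      (2 ≤ n → gainRatio n k (n - 1) < gainRatio n k n ∧
        gainRatio n k n ^ 2 < 4 * (gainRatio n k n - gainRatio n k (n - 1)) * δ') := by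
  have hk1 := hk 1 le_rfl (by omega)
  rcases Nat.eq_zero_or_pos n with rfl | hn
  · refine ⟨k 1 * δ, by positivity, ?_, ?_, by omega⟩
    · simp [hμ, gainRatio]
    · rintro X hX ⟨p, hp⟩
      exact absurd (hX p (Nat.zero_le _)) hp
  · have hD0 : gainRatio n k 0 = 0 := rfl
    have hSb' : ∀ p q : Fin (n + 1), Sb p q =
        if (p : ℕ) = 0 then gainRatio n k 1
        else if 1 ≤ (p : ℕ) ∧ (p : ℕ) ≤ (q : ℕ) ∧ (q : ℕ) < n then
          gainRatio n k (p + 1) - gainRatio n k p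
        else if (p : ℕ) = (q : ℕ) + 1 then -gainRatio n k (q + 1)
        else if (p : ℕ) = n ∧ (q : ℕ) = n then δ
        else 0 := by
      intro p q
      have hD : ∀ i : ℕ, i < n → gainRatio n k (i + 1) = k (n + 1 - i) / k (n + 1 - 1 - i) := by
        intro i hi
        rw [gainRatio, if_neg (by omega), show n + 1 - (i + 1) + 1 = n + 1 - i by omega,
          show n + 1 - (i + 1) = n + 1 - 1 - i by omega]
      rw [hSb]
      simp only [Nat.add_sub_cancel]
      by_cases h0 : (p : ℕ) = 0
      · rw [if_pos h0, if_pos h0, hD 0 hn]; simp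
      · rw [if_neg h0, if_neg h0]
        by_cases h1 : 1 ≤ (p : ℕ) ∧ (p : ℕ) ≤ (q : ℕ) ∧ (q : ℕ) < n
        · rw [if_pos h1, if_pos h1, hD p (by omega), gainRatio, if_neg h0, Nat.add_sub_cancel]
        · rw [if_neg h1, if_neg h1]
          by_cases h2 : (p : ℕ) = (q : ℕ) + 1
          · rw [if_pos h2, if_pos h2, hD q (by omega), Nat.add_sub_cancel]
          · rw [if_neg h2, if_neg h2]
    have hQ := hQbar (by omega)
    have hF := formPos_of_posDef hn hD0 hSb' hQ
    refine ⟨δ, hδ, ?_, hF, fun h2 => ?_⟩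
    · rw [hμ, if_neg (by omega), gainRatio, if_neg (by omega), Nat.add_sub_cancel_left]
      field_simp
      ring
    · have h3 := hF.growth_one hD0 (n - 1) (by omega)
      rw [Nat.sub_add_cancel hn] at h3
      exact ⟨h3, minor_of_posDef h2 h3 hSb' hQ⟩

/-- The coordinates `x_p = ξ_{M-p} / k_{M-p}` (blocks counted from one, `M = n + 1`), for the
component `a` of every block. -/
noncomputable def scaled {n W : ℕ} (k : ℕ → ℝ) (v : Fin (n + 1) × Fin W → ℝ) (a : Fin W)
    (p : Fin (n + 1)) : ℝ := v (p.rev, a) / k (n + 1 - p)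

lemma sum_scaled {n W : ℕ} (f : Fin (n + 1) × Fin W → ℝ) :
    ∑ i, f i = ∑ a, ∑ p : Fin (n + 1), f (p.rev, a) := by
  rw [Fintype.sum_prod_type_right]
  exact Finset.sum_congr rfl fun a _ => (Equiv.sum_comp Fin.revPerm fun p => f (p, a)).symm

lemma scaled_norms (n W : ℕ) (k : ℕ → ℝ) (hk : ∀ m, 1 ≤ m → m ≤ n + 1 → 0 < k m) :
    ∃ R > 0, ∀ v : Fin (n + 1) × Fin W → ℝ,
      euclNorm v ^ 2 ≤ R * ∑ a, scaled k v a ⬝ᵥ scaled k v a ∧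
      ∑ a, scaled k v a ⬝ᵥ scaled k v a ≤ R * euclNorm v ^ 2 := by
  set κ : Fin (n + 1) → ℝ := fun p => k (n + 1 - p) with hκ
  have hκ0 : ∀ p, 0 < κ p := fun p => hk _ (by omega) (by omega)
  have hR : ∀ p, κ p ^ 2 ≤ ∑ q, (κ q ^ 2 + (κ q ^ 2)⁻¹) ∧
      (κ p ^ 2)⁻¹ ≤ ∑ q, (κ q ^ 2 + (κ q ^ 2)⁻¹) := by
    intro p
    have h1 : κ p ^ 2 + (κ p ^ 2)⁻¹ ≤ ∑ q, (κ q ^ 2 + (κ q ^ 2)⁻¹) :=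
      Finset.single_le_sum (f := fun q => κ q ^ 2 + (κ q ^ 2)⁻¹) (fun q _ => by positivity)
        (Finset.mem_univ p)
    have h2 : 0 < κ p ^ 2 := pow_pos (hκ0 p) 2
    have h3 : 0 < (κ p ^ 2)⁻¹ := inv_pos.2 h2
    constructor <;> linarith
  refine ⟨∑ q, (κ q ^ 2 + (κ q ^ 2)⁻¹),
    (pow_pos (hκ0 0) 2).trans_le (hR 0).1, fun v => ⟨?_, ?_⟩⟩
  · rw [euclNorm_sq, sum_scaled, Finset.mul_sum]
    refine Finset.sum_le_sum fun a _ => ?_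
    rw [dotProduct, Finset.mul_sum]
    refine Finset.sum_le_sum fun p _ => ?_
    have h1 : v (p.rev, a) ^ 2 = κ p ^ 2 * (scaled k v a p * scaled k v a p) := by
      have := (hκ0 p).ne'
      change _ = κ p ^ 2 * (v (p.rev, a) / κ p * (v (p.rev, a) / κ p))
      field_simp
    rw [h1]
    exact mul_le_mul_of_nonneg_right (hR p).1 (mul_self_nonneg _)
  · rw [euclNorm_sq, sum_scaled, Finset.mul_sum]
    refine Finset.sum_le_sum fun a _ => ?_
    rw [dotProduct, Finset.mul_sum]
    refine Finset.sum_le_sum fun p _ => ?_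
    have h1 : scaled k v a p * scaled k v a p = (κ p ^ 2)⁻¹ * v (p.rev, a) ^ 2 := by
      have := (hκ0 p).ne'
      change v (p.rev, a) / κ p * (v (p.rev, a) / κ p) = _
      field_simp
    rw [h1]
    exact mul_le_mul_of_nonneg_right (hR p).2 (sq_nonneg _)

/-- In the coordinates `scaled` the observer-form right-hand side becomes the Lur'e form
`A x - w (1, …, 1) + u e₀ / k_M`. -/
lemma scaled_dynamics (n W : ℕ) (k : ℕ → ℝ) (hk : ∀ m, 1 ≤ m → m ≤ n + 1 → 0 < k m)
    (F : Matrix (Fin W) (Fin W) ℝ) (v : Fin (n + 1) × Fin W → ℝ) (u : Fin W → ℝ) (a : Fin W) :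
    scaled k ((Matrix.of fun p q : Fin (n + 1) × Fin W =>
          if (q.1 : ℕ) = 0 then -(k ((p.1 : ℕ) + 1)) * F p.2 q.2
          else if (q.1 : ℕ) = (p.1 : ℕ) + 1 ∧ p.2 = q.2 then 1
          else 0) *ᵥ v
          + fun p : Fin (n + 1) × Fin W => if (p.1 : ℕ) = n + 1 - 1 then u p.2 else 0) a
      = shiftMat n (gainRatio n k) *ᵥ scaled k v a - (∑ b, F a b * v (0, b)) • 1
        + u a • Pi.single 0 (k (n + 1))⁻¹ := by
  funext p
  rw [scaled, Pi.add_apply, observer_row, Pi.add_apply, Pi.sub_apply, shiftMat_mulVec]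
  have hkp := (hk (n + 1 - p) (by omega) (by omega)).ne'
  have h1 : (p.rev : ℕ) = n - p := by rw [Fin.val_rev]; omega
  have h2 : (p.rev : ℕ) + 1 = n + 1 - p := by omega
  simp only [h2, Pi.smul_apply, Pi.one_apply, smul_eq_mul, mul_one]
  simp only [h1]
  rcases Nat.eq_zero_or_pos (p : ℕ) with hp | hp
  · obtain rfl : p = 0 := Fin.ext hp
    simp only [Fin.val_zero, Nat.sub_zero] at hkp ⊢
    simp [gainRatio]
    field_simp
  · have hp' : p ≠ 0 := fun h => by simp [h] at hp
    rw [dif_pos (by omega), if_neg (by omega), Pi.single_eq_of_ne hp', mul_zero, add_zero, add_zero]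
    have hk2 := (hk (n + 1 - p + 1) (by omega) (by omega)).ne'
    have h3 : extZero (scaled k v a) (p - 1) = v (⟨n + 1 - p, by omega⟩, a) / k (n + 1 - p + 1) := by
      rw [extZero, dif_pos (by omega), scaled]
      congr 2
      · congr 1
        apply Fin.ext
        rw [Fin.val_rev]
        simp only
        omega
      · simp only; omega
    rw [h3, gainRatio, if_neg hp.ne']
    field_simp
    ring

/-- The sector condition: `Φ ≻ μ I` in terms of the coordinate `x_n = ξ_1 / k_1`. -/
lemma sector_bound (n W : ℕ) (k : ℕ → ℝ) (hk : ∀ m, 1 ≤ m → m ≤ n + 1 → 0 < k m) (μ : ℝ)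
    (F : Matrix (Fin W) (Fin W) ℝ) (hF : (F - μ • (1 : Matrix (Fin W) (Fin W) ℝ)).PosDef)
    (v : Fin (n + 1) × Fin W → ℝ) :
    k 1 * μ * ∑ a, (scaled k v a ⬝ᵥ Pi.single (Fin.last n) 1) ^ 2
      ≤ ∑ a, (∑ b, F a b * v (0, b)) * (scaled k v a ⬝ᵥ Pi.single (Fin.last n) 1) := by
  have hk1 := hk 1 le_rfl (by omega)
  have h0 : ∀ a, scaled k v a ⬝ᵥ Pi.single (Fin.last n) 1 = v (0, a) / k 1 := by
    intro a
    rw [dotProduct_single_one, scaled, Fin.rev_last, Fin.val_last, Nat.add_sub_cancel_left]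
  simp only [h0]
  have h1 := hF.posSemidef.dotProduct_mulVec_nonneg fun a => v (0, a)
  rw [star_trivial, Matrix.sub_mulVec, Matrix.smul_mulVec, Matrix.one_mulVec, dotProduct_sub,
    dotProduct_smul, smul_eq_mul, sub_nonneg] at h1
  have h2 : k 1 * μ * ∑ a, (v (0, a) / k 1) ^ 2
      = (k 1)⁻¹ * (μ * ((fun a => v (0, a)) ⬝ᵥ fun a => v (0, a))) := by
    simp only [dotProduct, Finset.mul_sum]
    refine Finset.sum_congr rfl fun a _ => ?_
    field_simp
  have h3 : ∑ a, (∑ b, F a b * v (0, b)) * (v (0, a) / k 1)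
      = (k 1)⁻¹ * ((fun a => v (0, a)) ⬝ᵥ (F *ᵥ fun a => v (0, a))) := by
    simp only [dotProduct, Matrix.mulVec]
    rw [Finset.mul_sum]
    refine Finset.sum_congr rfl fun a _ => ?_
    field_simp
  rw [h2, h3]
  exact mul_le_mul_of_nonneg_left h1 (inv_pos.2 hk1).le

/-- Lemma 4 of the paper: input-to-state stability of the
generalized observer-form system `ξ' = Ξ(t,ξ) ξ + B ⊗ u` with the input entering
the last `W`-block.  Gains are indexed 1-based (`k m = k_m` for `1 ≤ m ≤ M`),
`μ = δ` if `M = 1` and `μ = (δk₁ + k₂)/k₁²` otherwise, and for `M ≥ 2` the LMI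
matrix `Q̄ = Σ̄ + Σ̄ᵀ` built from the gain ratios must be positive definite. -/
theorem iss_general_M (W M : ℕ) (hW : 1 ≤ W) (hM : 1 ≤ M)
    (k : ℕ → ℝ) (hk : ∀ m, 1 ≤ m → m ≤ M → 0 < k m)
    (δ : ℝ) (hδ : 0 < δ)
    (μ : ℝ) (hμ : μ = if M = 1 then δ else (δ * k 1 + k 2) / (k 1) ^ 2)
    (Φ : ℝ → (Fin M × Fin W → ℝ) → Matrix (Fin W) (Fin W) ℝ)
    (hΦsymm : ∀ t v, (Φ t v).IsHermitian)
    (hΦpd : ∀ t v, (Φ t v - μ • (1 : Matrix (Fin W) (Fin W) ℝ)).PosDef)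
    (Sb : Matrix (Fin M) (Fin M) ℝ)
    (hSb : ∀ p q : Fin M, Sb p q =
      if (p : ℕ) = 0 then k M / k (M - 1)
      else if 1 ≤ (p : ℕ) ∧ (p : ℕ) ≤ (q : ℕ) ∧ (q : ℕ) < M - 1 then
        k (M - (p : ℕ)) / k (M - 1 - (p : ℕ)) - k (M - (p : ℕ) + 1) / k (M - (p : ℕ))
      else if (p : ℕ) = (q : ℕ) + 1 then -(k (M - (q : ℕ)) / k (M - 1 - (q : ℕ)))
      else if (p : ℕ) = M - 1 ∧ (q : ℕ) = M - 1 then δ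
      else 0)
    (hQbar : 2 ≤ M → (Sb + Sbᵀ).PosDef) :
    ∃ c > (0 : ℝ), ∃ lam > (0 : ℝ), ∃ ρ > (0 : ℝ),
      ∀ (t₀ : ℝ) (u : ℝ → Fin W → ℝ),
      (∃ Umax : ℝ, ∀ s : ℝ, euclNorm (u s) ≤ Umax) →
      (∃ D : Set ℝ, D.Countable ∧ ∀ s ∉ D, ContinuousAt u s) →
      ∀ ξ : ℝ → (Fin M × Fin W → ℝ), Differentiable ℝ ξ →
      (∀ t, t₀ ≤ t → HasDerivAt ξ
        ((Matrix.of fun p q : Fin M × Fin W =>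
          if (q.1 : ℕ) = 0 then -(k ((p.1 : ℕ) + 1)) * Φ t (ξ t) p.2 q.2
          else if (q.1 : ℕ) = (p.1 : ℕ) + 1 ∧ p.2 = q.2 then 1
          else 0) *ᵥ ξ t
          + fun p : Fin M × Fin W => if (p.1 : ℕ) = M - 1 then u t p.2 else 0) t) →
      ∀ t, t₀ ≤ t →
        euclNorm (ξ t) ≤ c * euclNorm (ξ t₀) * Real.exp (-lam * (t - t₀))
          + ρ * sSup ((fun s => euclNorm (u s)) '' Set.Icc t₀ t) := by
  obtain ⟨n, rfl⟩ : ∃ n, M = n + 1 := ⟨M - 1, by omega⟩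
  obtain ⟨δ', hδ', hμ', hF, hn2⟩ := gain_conditions n k hk δ hδ μ hμ Sb hSb hQbar
  have hD0 : gainRatio n k 0 = 0 := rfl
  have hDpos : ∀ i, 1 ≤ i → i ≤ n → 0 < gainRatio n k i := by
    intro i h1 h2
    rw [gainRatio, if_neg (by omega)]
    exact div_pos (hk _ (by omega) (by omega)) (hk _ (by omega) (by omega))
  obtain ⟨H, hH, hform⟩ := exists_lyapunov n (gainRatio n k) hD0 hF hDpos
    (fun i hi => (hF.growth_two hD0 i hi).le) δ' hδ' hn2
  obtain ⟨P, hP, hPpos, hP1, hPform⟩ := lyapunov_assembled n _ _ H hH hform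
  obtain ⟨c, hc, r, hr, ρ, hρ, hiss⟩ := lure_iss (ι := Fin W) P (shiftMat n (gainRatio n k)) hP
    hPpos 1 (Pi.single 0 (k (n + 1))⁻¹) _ _ hP1 hPform
  obtain ⟨R, hR, hRv⟩ := scaled_norms n W k hk
  refine ⟨√(R * (c * R)), by positivity, r / 2, by positivity, √(R * ρ), by positivity, ?_⟩
  rintro t₀ u ⟨Umax, hUmax⟩ - ξ - hξ t ht
  set U := sSup ((fun s => euclNorm (u s)) '' Set.Icc t₀ t) with hU
  have hbdd : BddAbove ((fun s => euclNorm (u s)) '' Set.Icc t₀ t) :=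
    ⟨Umax, by rintro _ ⟨s, -, rfl⟩; exact hUmax s⟩
  have hU0 : 0 ≤ U := Real.sSup_nonneg (by rintro _ ⟨s, -, rfl⟩; exact euclNorm_nonneg _)
  have hmain := hiss t₀ t U (fun s => scaled k (ξ s))
    (fun s a => ∑ b, Φ s (ξ s) a b * ξ s (0, b)) u ht
    (by
      intro s hs
      rw [← euclNorm_sq]
      exact pow_le_pow_left₀ (euclNorm_nonneg _) (le_csSup hbdd ⟨s, hs, rfl⟩) 2)
    (by
      intro s _
      rw [← hμ']
      exact sector_bound n W k hk μ _ (hΦpd s (ξ s)) (ξ s))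
    (by
      intro s hs a
      rw [← scaled_dynamics n W k hk]
      exact hasDerivAt_pi.2 fun p => (hasDerivAt_pi.1 (hξ s hs.1) (p.rev, a)).div_const _)
  -- `‖ξ(t)‖² ≤ α² + β²` with `α`, `β` the two terms of the bound, hence `‖ξ(t)‖ ≤ α + β`
  have hsq : euclNorm (ξ t) ^ 2 ≤
      (√(R * (c * R)) * euclNorm (ξ t₀) * Real.exp (-(r / 2) * (t - t₀))) ^ 2
        + (√(R * ρ) * U) ^ 2 := by
    rw [mul_pow, mul_pow, mul_pow, Real.sq_sqrt (by positivity), Real.sq_sqrt (by positivity),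
      ← Real.exp_nat_mul, show ((2 : ℕ) : ℝ) * (-(r / 2) * (t - t₀)) = -r * (t - t₀) by
        push_cast; ring]
    have h1 := mul_le_mul_of_nonneg_left hmain hR.le
    have h2 : R * (c * (∑ a, scaled k (ξ t₀) a ⬝ᵥ scaled k (ξ t₀) a) * Real.exp (-r * (t - t₀)))
        ≤ R * (c * (R * euclNorm (ξ t₀) ^ 2) * Real.exp (-r * (t - t₀))) := by
      have := (hRv (ξ t₀)).2
      gcongr
    have h3 := (hRv (ξ t)).1
    rw [mul_add] at h1
    linarith
  have hα : 0 ≤ √(R * (c * R)) * euclNorm (ξ t₀) * Real.exp (-(r / 2) * (t - t₀)) :=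
    mul_nonneg (mul_nonneg (Real.sqrt_nonneg _) (euclNorm_nonneg _)) (Real.exp_pos _).le
  have hβ : 0 ≤ √(R * ρ) * U := mul_nonneg (Real.sqrt_nonneg _) hU0
  refine le_of_sq_le_sq ?_ (add_nonneg hα hβ)
  nlinarith [mul_nonneg hα hβ]
end

section
/- Let N ≥ 2, K ≥ 1, let Ψ₁, …, Ψ_N be K×K real symmetric matrices, and let Ψ = diag(Ψ₁, …, Ψ_N) be the (KN)×(KN) block-diagonal matrix with these blocks. Let L be an N×N real symmetric positive semidefinite matrix with L·𝟙 = 0 (𝟙 the all-ones vector), and suppose there is λ₂ > 0 such that vᵀLv ≥ λ₂‖v‖² for every v ∈ ℝ^N with 𝟙ᵀv = 0. Let μ > 0 and γ > 0 be such that (1/N)·Σ_{i=1}^N Ψ_i − (μ + γ)·I_K is positive definite, and let α be a real number with α > (μ + ‖(1/γ)Ψ² − Ψ‖)/λ₂, where ‖·‖ is the spectral norm. Then Ψ + α·(L ⊗ I_K) − μ·I_{KN} is positive definite, where ⊗ denotes the Kronecker product. -/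
/-!
Split `x ∈ ℝ^{NK}` as `x = u + y`, where `u = 𝟙 ⊗ a` repeats the block average `a` of `x` and
`y` has block average zero. The form of `L ⊗ I` does not see `u`, and by the spectral-gap
hypothesis, applied to each of the `K` coordinates, it is at least `λ₂ ‖y‖²`
(`kronecker_form_ge`). The averaged excitation condition gives `uᵀΨu ≥ (μ + γ) ‖u‖²`, strictly
when `u ≠ 0`, since `uᵀΨu = aᵀ(∑ Ψᵢ)a` (`blockDiag_form_const`). The cross term is absorbed by
Young's inequality, `2 uᵀΨy ≥ -γ ‖u‖² - γ⁻¹ ‖Ψy‖²`, and what remains of the `y`-part,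
`yᵀ(Ψ - γ⁻¹Ψ²)y`, is at least `-‖γ⁻¹Ψ² - Ψ‖ ‖y‖²` (`form_le_specNorm`). Also `u ⊥ y`, so
`xᵀ(Ψ + α L ⊗ I - μ)x ≥ (uᵀΨu - (μ + γ)‖u‖²) + (α λ₂ - μ - ‖γ⁻¹Ψ² - Ψ‖) ‖y‖²`,
and one of the two summands is positive as soon as `x ≠ 0`.
-/

open Matrix
open scoped Kronecker

/-- The spectral (ℓ²-operator) norm of a real square matrix. -/
noncomputable def specNorm {ι : Type*} [Fintype ι] [DecidableEq ι]
    (A : Matrix ι ι ℝ) : ℝ :=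
  ‖Matrix.toEuclideanCLM (𝕜 := ℝ) A‖

lemma form_le_specNorm {ι : Type*} [Fintype ι] [DecidableEq ι] (A : Matrix ι ι ℝ) (y : ι → ℝ) :
    y ⬝ᵥ (A *ᵥ y) ≤ specNorm A * (y ⬝ᵥ y) := by
  have h1 : inner ℝ (Matrix.toEuclideanCLM (𝕜 := ℝ) A (WithLp.toLp 2 y)) (WithLp.toLp 2 y)
      = y ⬝ᵥ (A *ᵥ y) := by
    simp [Matrix.toEuclideanCLM_toLp, EuclideanSpace.inner_toLp_toLp]
  have h2 : ‖WithLp.toLp 2 y‖ * ‖WithLp.toLp 2 y‖ = y ⬝ᵥ y := by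
    rw [← real_inner_self_eq_norm_mul_norm, EuclideanSpace.inner_toLp_toLp]
    simp
  rw [← h1, ← h2, ← mul_assoc]
  refine (real_inner_le_norm _ _).trans ?_
  gcongr
  exact ContinuousLinearMap.le_opNorm _ _

lemma kronecker_one_form {ι κ : Type*} [Fintype ι] [Fintype κ] [DecidableEq κ]
    (L : Matrix ι ι ℝ) (x : ι × κ → ℝ) :
    x ⬝ᵥ ((L ⊗ₖ (1 : Matrix κ κ ℝ)) *ᵥ x)
      = ∑ k, (fun i => x (i, k)) ⬝ᵥ (L *ᵥ fun i => x (i, k)) := by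
  simp only [dotProduct, mulVec, Fintype.sum_prod_type, kroneckerMap_apply, Matrix.one_apply,
    mul_ite, mul_one, mul_zero, ite_mul, zero_mul, Finset.sum_ite_eq, Finset.mem_univ, if_true]
  rw [Finset.sum_comm]

/-- The spectral gap of `L` on `𝟙ᗮ` passes to `L ⊗ I` on `(𝟙 ⊗ ℝ^κ)ᗮ`, and since `L 𝟙 = 0`
the component `𝟙 ⊗ a` is irrelevant. -/
lemma kronecker_form_ge {ι κ : Type*} [Fintype ι] [Fintype κ] [DecidableEq κ]
    (L : Matrix ι ι ℝ) (hLsymm : L.IsHermitian) (hL1 : L *ᵥ (fun _ => (1 : ℝ)) = 0) (lam2 : ℝ)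
    (hfiedler : ∀ v : ι → ℝ, (∑ i, v i) = 0 → lam2 * (∑ i, v i ^ 2) ≤ v ⬝ᵥ (L *ᵥ v))
    (a : κ → ℝ) (y : ι × κ → ℝ) (hy : ∀ k, ∑ i, y (i, k) = 0) :
    lam2 * (y ⬝ᵥ y) ≤
      ((fun p => a p.2) + y) ⬝ᵥ
        ((L ⊗ₖ (1 : Matrix κ κ ℝ)) *ᵥ ((fun p => a p.2) + y)) := by
  rw [kronecker_one_form]
  have h1 : lam2 * (y ⬝ᵥ y) = ∑ k, lam2 * ∑ i, y (i, k) ^ 2 := by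
    rw [← Finset.mul_sum, dotProduct, Fintype.sum_prod_type_right]
    simp only [pow_two]
  rw [h1]
  refine Finset.sum_le_sum fun k _ => (hfiedler _ (hy k)).trans_eq ?_
  have h2 : (fun i => ((fun p : ι × κ => a p.2) + y) (i, k))
      = a k • (fun _ => (1 : ℝ)) + fun i => y (i, k) := by
    ext i; simp
  have h3 : (fun _ => (1 : ℝ)) ⬝ᵥ (L *ᵥ fun i => y (i, k)) = 0 := by
    have hT : Lᵀ = L := by simpa [IsHermitian, conjTranspose_eq_transpose_of_trivial] using hLsymm
    rw [dotProduct_mulVec, ← mulVec_transpose, hT, hL1, zero_dotProduct]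
  rw [h2, mulVec_add, mulVec_smul, hL1, smul_zero, zero_add, add_dotProduct, smul_dotProduct, h3]
  simp

lemma blockDiag_form_const {ι κ : Type*} [Fintype ι] [DecidableEq ι] [Fintype κ]
    (Ψ : ι → Matrix κ κ ℝ) (Ψb : Matrix (ι × κ) (ι × κ) ℝ)
    (hΨb : ∀ p q, Ψb p q = if p.1 = q.1 then Ψ p.1 p.2 q.2 else 0) (a : κ → ℝ) :
    (fun p : ι × κ => a p.2) ⬝ᵥ (Ψb *ᵥ fun p => a p.2) = a ⬝ᵥ ((∑ i, Ψ i) *ᵥ a) := by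
  have hsum : (∑ i, Ψ i) *ᵥ a = ∑ i, Ψ i *ᵥ a := Matrix.sum_mulVec _ _ _
  rw [hsum, dotProduct_sum, dotProduct, Fintype.sum_prod_type]
  refine Finset.sum_congr rfl fun i _ => Finset.sum_congr rfl fun k _ => ?_
  simp only [mulVec, dotProduct, Fintype.sum_prod_type, hΨb]
  rw [Finset.sum_eq_single i] <;> simp +contextual [eq_comm]

lemma young_dotProduct {ι : Type*} [Fintype ι] {γ : ℝ} (hγ : 0 < γ) (u w : ι → ℝ) :
    0 ≤ γ * (u ⬝ᵥ u) + 2 * (u ⬝ᵥ w) + 1 / γ * (w ⬝ᵥ w) := by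
  simp only [dotProduct, Finset.mul_sum, ← Finset.sum_add_distrib]
  refine Finset.sum_nonneg fun i _ => ?_
  have : γ * (u i * u i) + 2 * (u i * w i) + 1 / γ * (w i * w i)
      = 1 / γ * (γ * u i + w i) ^ 2 := by
    field_simp; ring
  rw [this]; positivity

/-- key matrix inequality in the proof of Theorem 2 of the paper.
With `Ψb = diag(Ψ₁, …, Ψ_N)`, a Laplacian-like matrix `L` with smallest positive
eigenvalue at least `λ₂`, the spatial excitation condition
`(1/N) Σᵢ Ψᵢ ≻ (μ+γ) I_K`, and `α > (μ + ‖(1/γ)Ψ² − Ψ‖)/λ₂`, one has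
`Ψ + α (L ⊗ I_K) − μ I_{KN} ≻ 0`. -/
theorem consensus_innovation_posdef (N K : ℕ) (hN : 2 ≤ N) (hK : 1 ≤ K)
    (Ψ : Fin N → Matrix (Fin K) (Fin K) ℝ) (hΨ : ∀ i, (Ψ i).IsHermitian)
    (Ψb : Matrix (Fin N × Fin K) (Fin N × Fin K) ℝ)
    (hΨb : ∀ p q : Fin N × Fin K, Ψb p q = if p.1 = q.1 then Ψ p.1 p.2 q.2 else 0)
    (L : Matrix (Fin N) (Fin N) ℝ) (hLsymm : L.IsHermitian) (hLpsd : L.PosSemidef)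
    (hL1 : L *ᵥ (fun _ => (1 : ℝ)) = 0)
    (lam2 : ℝ) (hlam2 : 0 < lam2)
    (hfiedler : ∀ v : Fin N → ℝ, (∑ i, v i) = 0 →
      lam2 * (∑ i, v i ^ 2) ≤ v ⬝ᵥ (L *ᵥ v))
    (μ γ : ℝ) (hμ : 0 < μ) (hγ : 0 < γ)
    (hexc : (((N : ℝ))⁻¹ • (∑ i, Ψ i) - (μ + γ) • (1 : Matrix (Fin K) (Fin K) ℝ)).PosDef)
    (α : ℝ) (hα : (μ + specNorm ((1 / γ) • (Ψb * Ψb) - Ψb)) / lam2 < α) :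
    (Ψb + α • (L ⊗ₖ (1 : Matrix (Fin K) (Fin K) ℝ))
      - μ • (1 : Matrix (Fin N × Fin K) (Fin N × Fin K) ℝ)).PosDef := by
  have hN0 : (0 : ℝ) < N := by exact_mod_cast (by omega : 0 < N)
  have hΨbT : Ψbᵀ = Ψb := by
    ext p q
    rw [transpose_apply, hΨb, hΨb]
    by_cases h : p.1 = q.1
    · simpa [h] using (hΨ q.1).apply p.2 q.2
    · simp [h, Ne.symm h]
  refine PosDef.of_dotProduct_mulVec_pos ?_ fun x hx => ?_
  · have h1 : (L ⊗ₖ (1 : Matrix (Fin K) (Fin K) ℝ))ᵀ = L ⊗ₖ 1 := by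
      have hT : Lᵀ = L := by simpa [IsHermitian, conjTranspose_eq_transpose_of_trivial] using hLsymm
      rw [← kroneckerMap_transpose, hT, transpose_one]
    rw [IsHermitian, conjTranspose_eq_transpose_of_trivial, transpose_sub, transpose_add,
      transpose_smul, transpose_smul, h1, hΨbT, transpose_one]
  rw [star_trivial]
  obtain ⟨a, y, hy, rfl⟩ : ∃ (a : Fin K → ℝ) (y : Fin N × Fin K → ℝ),
      (∀ k, ∑ i, y (i, k) = 0) ∧ x = (fun p => a p.2) + y := by
    refine ⟨fun k => (N : ℝ)⁻¹ * ∑ i, x (i, k),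
      fun p => x p - (N : ℝ)⁻¹ * ∑ i, x (i, p.2), fun k => ?_, ?_⟩
    · simp [Finset.sum_sub_distrib, hN0.ne']
    · ext p; simp
  have hL := kronecker_form_ge L hLsymm hL1 lam2 hfiedler a y hy
  have hΨu := blockDiag_form_const Ψ Ψb hΨb a
  have huy : (fun p : Fin N × Fin K => a p.2) ⬝ᵥ y = 0 := by
    simp [dotProduct, Fintype.sum_prod_type_right, ← Finset.mul_sum, hy]
  have huu : (fun p : Fin N × Fin K => a p.2) ⬝ᵥ (fun p => a p.2) = N * (a ⬝ᵥ a) := by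
    simp [dotProduct, Fintype.sum_prod_type]
  have hexc_form : a ⬝ᵥ (((N : ℝ)⁻¹ • (∑ i, Ψ i)
      - (μ + γ) • (1 : Matrix (Fin K) (Fin K) ℝ)) *ᵥ a)
      = (N : ℝ)⁻¹ * (a ⬝ᵥ ((∑ i, Ψ i) *ᵥ a)) - (μ + γ) * (a ⬝ᵥ a) := by
    simp only [sub_mulVec, smul_mulVec, one_mulVec, dotProduct_sub, dotProduct_smul, smul_eq_mul]
  have hscale : a ⬝ᵥ ((∑ i, Ψ i) *ᵥ a) - (μ + γ) * (N * (a ⬝ᵥ a))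
      = N * ((N : ℝ)⁻¹ * (a ⬝ᵥ ((∑ i, Ψ i) *ᵥ a)) - (μ + γ) * (a ⬝ᵥ a)) := by
    field_simp
  have hpos : a ≠ 0 → 0 < a ⬝ᵥ ((∑ i, Ψ i) *ᵥ a) - (μ + γ) * (N * (a ⬝ᵥ a)) := by
    intro ha
    have := hexc.dotProduct_mulVec_pos ha
    rw [star_trivial, hexc_form] at this
    rw [hscale]
    exact mul_pos hN0 this
  have hyoung := young_dotProduct hγ (fun p : Fin N × Fin K => a p.2) (Ψb *ᵥ y)
  have hspec := form_le_specNorm ((1 / γ) • (Ψb * Ψb) - Ψb) y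
  have hsymm : ∀ v w, v ⬝ᵥ (Ψb *ᵥ w) = w ⬝ᵥ (Ψb *ᵥ v) := by
    intro v w
    rw [dotProduct_mulVec, ← mulVec_transpose, hΨbT, dotProduct_comm]
  rw [sub_mulVec, smul_mulVec, ← mulVec_mulVec, dotProduct_sub, dotProduct_smul, smul_eq_mul,
    hsymm y (Ψb *ᵥ y)] at hspec
  have hα' : μ + specNorm ((1 / γ) • (Ψb * Ψb) - Ψb) < α * lam2 := (div_lt_iff₀ hlam2).1 hα
  have hS : 0 ≤ specNorm ((1 / γ) • (Ψb * Ψb) - Ψb) := norm_nonneg _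
  have hαpos : 0 < α := lt_of_le_of_lt (by positivity) hα
  have hαL := mul_le_mul_of_nonneg_left hL hαpos.le
  have hyy : 0 ≤ y ⬝ᵥ y := by simpa using dotProduct_star_self_nonneg y
  rw [sub_mulVec, add_mulVec, smul_mulVec, smul_mulVec, one_mulVec, dotProduct_sub,
    dotProduct_add, dotProduct_smul, dotProduct_smul, smul_eq_mul, smul_eq_mul]
  generalize hq : ((fun p : Fin N × Fin K => a p.2) + y) ⬝ᵥ
    ((L ⊗ₖ (1 : Matrix (Fin K) (Fin K) ℝ)) *ᵥ ((fun p => a p.2) + y)) = q at hL hαL ⊢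
  rw [mulVec_add, add_dotProduct, dotProduct_add, dotProduct_add, add_dotProduct, dotProduct_add,
    dotProduct_add, hsymm y (fun p => a p.2), dotProduct_comm y (fun p => a p.2), huy, huu, hΨu]
  rw [huu] at hyoung
  by_cases ha : a = 0
  · have hy0 : y ≠ 0 := by
      rintro rfl
      apply hx
      ext p; simp [ha]
    have hyy' : 0 < y ⬝ᵥ y := by simpa using dotProduct_star_self_pos_iff.2 hy0
    have hgap := mul_pos (sub_pos.2 hα') hyy'
    have haa : a ⬝ᵥ ((∑ i, Ψ i) *ᵥ a) - (μ + γ) * (N * (a ⬝ᵥ a)) = 0 := by simp [ha]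
    linarith
  · have hgap := mul_nonneg (sub_pos.2 hα').le hyy
    have := hpos ha
    linarith
end
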